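/- Let ρ be a quasi-periodic labelling and let a₁, a₂, a₃ ∈ G_ρ. Then there exist h, g₁, g₂, g₃ ∈ G_ρ and nonempty sets I₁ ⊆ I₂ ⊆ I₃ ⊆ ℝ with the following properties, where f_i := h⁻¹ a_i h for i = 1, 2, 3: (1) each of the subgroups ⟨g₁, g₂, g₃⟩, ⟨f₁, g₁⟩, ⟨f₂, g₂⟩, ⟨f₃, g₃⟩ of G_ρ has a global fixed point in ℝ; (2) the element f_i g_i fixes I_i pointwise for i = 1, 2, 3; (3) the support {x ∈ ℝ : g_i(x) ≠ x} of g_i is contained in I_{i+1} for i = 1, 2. -/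

import Mathlib

/-! ### Letters, labellings and quasi-periodicity -/

/-- The four letters `a, b, a⁻¹, b⁻¹`. -/
inductive Letter : Type
  | a : Letter
  | b : Letter
  | A : Letter  -- `a⁻¹`
  | B : Letter  -- `b⁻¹`
  deriving DecidableEq

/-- The formal inverse of a letter. -/
def Letter.inv : Letter → Letter
  | .a => .A
  | .A => .a
  | .b => .B
  | .B => .b

/-- We encode the set of half-integers `½ℤ` by `ℤ` via `m ↦ m / 2`; integer points
correspond to even indices and proper half-integer points to odd indices.
A labelling assigns `a^{±1}` to integer points and `b^{±1}` to half-integer points. -/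
def IsLabelling (ρ : ℤ → Letter) : Prop :=
  ∀ m : ℤ, (Even m → ρ m = Letter.a ∨ ρ m = Letter.A) ∧
    (Odd m → ρ m = Letter.b ∨ ρ m = Letter.B)

/-- The word of the labelling `ρ` along the block `{k, k+1, …, k+n}` (in the
half-integer encoding, the block of size `n+1` starting at `k/2`). -/
def blockWord (ρ : ℤ → Letter) (k : ℤ) (n : ℕ) : List Letter :=
  (List.range (n + 1)).map fun i => ρ (k + i)

/-- The formal inverse of a word: reverse the word and invert each letter. -/
def wordInv (w : List Letter) : List Letter :=
  (w.map Letter.inv).reverse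

/-- A labelling is quasi-periodic if (1) every subword of the labelling appears as a
subword (string of consecutive letters) of every sufficiently large block, and (2) the
formal inverse of every subword of the labelling is again a subword of the labelling. -/
def IsQuasiPeriodic (ρ : ℤ → Letter) : Prop :=
  IsLabelling ρ ∧
    (∀ (k : ℤ) (n : ℕ), ∃ N : ℕ, ∀ (k' : ℤ) (n' : ℕ), N ≤ n' + 1 →
      (blockWord ρ k n) <:+: (blockWord ρ k' n')) ∧
    (∀ (k : ℤ) (n : ℕ), ∃ k' : ℤ, blockWord ρ k' n = wordInv (blockWord ρ k n))

/-! ### Thompson's group `F` and the subgroup `H`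

Orientation-preserving homeomorphisms of `[0,1]` are realised as order-automorphisms
of `ℝ` that are the identity outside `[0,1]`; orientation-preserving homeomorphisms of
the line are order-automorphisms of `ℝ`. -/

/-- A dyadic rational real number, i.e. an element of `ℤ[1/2]`. -/
def IsDyadic (x : ℝ) : Prop :=
  ∃ (a : ℤ) (b : ℕ), x = (a : ℝ) / 2 ^ b

/-- Membership in Thompson's group `F`: the identity outside `[0,1]`, and on `[0,1]`
piecewise linear with breakpoints in `ℤ[1/2]` and slopes integer powers of `2`. -/
def InThompsonF (f : ℝ ≃o ℝ) : Prop :=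
  (∀ x : ℝ, x ∉ Set.Icc (0 : ℝ) 1 → f x = x) ∧
    ∃ (m : ℕ) (x : Fin (m + 1) → ℝ), x 0 = 0 ∧ x (Fin.last m) = 1 ∧ StrictMono x ∧
      (∀ i, IsDyadic (x i)) ∧
      ∀ i : Fin m, ∃ (k : ℤ) (c : ℝ),
        ∀ t ∈ Set.Icc (x i.castSucc) (x i.succ), f t = 2 ^ k * t + c

/-- Membership in the subgroup `H ≤ F` of elements whose slopes at `0` and `1`
coincide. -/
def InH (f : ℝ ≃o ℝ) : Prop :=
  InThompsonF f ∧
    ∃ (k : ℤ) (ε : ℝ), 0 < ε ∧ (∀ t ∈ Set.Icc (0 : ℝ) ε, f t = 2 ^ k * t) ∧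
      ∀ t ∈ Set.Icc (1 - ε) (1 : ℝ), f t = 1 + 2 ^ k * (t - 1)

/-! ### The generators of `G_ρ` -/

/-- `ζ` is the homeomorphism of `ℝ` which on each `[n, n+1]` is the conjugate of `ν`
(a homeomorphism of `[0,1]`) by the orientation-preserving isometry `[n,n+1] → [0,1]`
if `ρ(n + ½) = b`, and by the orientation-reversing isometry if `ρ(n + ½) = b⁻¹`.
(In the encoding of `½ℤ` by `ℤ`, the point `n + ½` has index `2n + 1`.) -/
def IsZeta (ρ : ℤ → Letter) (ν ζ : ℝ ≃o ℝ) : Prop :=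
  ∀ n : ℤ, ∀ x ∈ Set.Icc (n : ℝ) (n + 1),
    (ρ (2 * n + 1) = Letter.b → ζ x = n + ν (x - n)) ∧
    (ρ (2 * n + 1) = Letter.B → ζ x = (n + 1) - ν ((n + 1) - x))

/-- `χ` is the homeomorphism of `ℝ` which on each `[n-½, n+½]` is the conjugate of `ν`
by the orientation-preserving isometry `[n-½, n+½] → [0,1]` if `ρ(n) = a`, and by the
orientation-reversing isometry if `ρ(n) = a⁻¹`. -/
def IsChi (ρ : ℤ → Letter) (ν χ : ℝ ≃o ℝ) : Prop :=
  ∀ n : ℤ, ∀ x ∈ Set.Icc ((n : ℝ) - 1/2) ((n : ℝ) + 1/2),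
    (ρ (2 * n) = Letter.a → χ x = ((n : ℝ) - 1/2) + ν (x - ((n : ℝ) - 1/2))) ∧
    (ρ (2 * n) = Letter.A → χ x = ((n : ℝ) + 1/2) - ν (((n : ℝ) + 1/2) - x))

/-! ### Bounded cohomology in degree two -/

/-- A bounded 2-cocycle on `G` with trivial real coefficients. -/
def IsBounded2Cocycle {G : Type*} [Group G] (ω : G → G → ℝ) : Prop :=
  (∃ C : ℝ, ∀ g h : G, |ω g h| ≤ C) ∧
    ∀ g₁ g₂ g₃ : G, ω g₂ g₃ - ω (g₁ * g₂) g₃ + ω g₁ (g₂ * g₃) - ω g₁ g₂ = 0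

/-- `ω` is the coboundary of a bounded real-valued function. -/
def IsCoboundaryOfBounded {G : Type*} [Group G] (ω : G → G → ℝ) : Prop :=
  ∃ φ : G → ℝ, (∃ C : ℝ, ∀ g : G, |φ g| ≤ C) ∧
    ∀ g h : G, ω g h = φ h - φ (g * h) + φ g

/-- A group is 2-boundedly acyclic if `H²_b(G; ℝ) = 0`, i.e. every bounded 2-cocycle is
the coboundary of a bounded function. -/
def Is2BoundedlyAcyclic (G : Type*) [Group G] : Prop :=
  ∀ ω : G → G → ℝ, IsBounded2Cocycle ω → IsCoboundaryOfBounded ω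

/-- A 2-cocycle is homogeneous if it vanishes on powers of a single element. -/
def IsHomogeneous {G : Type*} [Group G] (ω : G → G → ℝ) : Prop :=
  ∀ (g : G) (i j : ℤ), ω (g ^ i) (g ^ j) = 0

/-! ### Auxiliary material: dyadic piecewise linear maps -/

theorem IsDyadic.add' {x y : ℝ} (hx : IsDyadic x) (hy : IsDyadic y) : IsDyadic (x + y) := by
  obtain ⟨a, b, rfl⟩ := hx
  obtain ⟨c, d, rfl⟩ := hy
  refine ⟨a * 2 ^ d + c * 2 ^ b, b + d, ?_⟩
  push_cast
  rw [pow_add]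
  field_simp

theorem IsDyadic.neg' {x : ℝ} (hx : IsDyadic x) : IsDyadic (-x) := by
  obtain ⟨a, b, rfl⟩ := hx
  refine ⟨-a, b, ?_⟩
  push_cast
  ring

theorem IsDyadic.sub' {x y : ℝ} (hx : IsDyadic x) (hy : IsDyadic y) : IsDyadic (x - y) := by
  rw [sub_eq_add_neg]
  exact hx.add' hy.neg'

theorem IsDyadic.mul' {x y : ℝ} (hx : IsDyadic x) (hy : IsDyadic y) : IsDyadic (x * y) := by
  obtain ⟨a, b, rfl⟩ := hx
  obtain ⟨c, d, rfl⟩ := hy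
  refine ⟨a * c, b + d, ?_⟩
  push_cast
  rw [pow_add]
  field_simp

theorem isDyadic_int (n : ℤ) : IsDyadic (n : ℝ) := ⟨n, 0, by simp⟩

theorem isDyadic_half (n : ℤ) : IsDyadic ((n : ℝ) / 2) := ⟨n, 1, by simp⟩

theorem isDyadic_zpow (k : ℤ) : IsDyadic ((2 : ℝ) ^ k) := by
  rcases Int.eq_nat_or_neg k with ⟨n, rfl | rfl⟩
  · exact ⟨2 ^ n, 0, by simp⟩
  · exact ⟨1, n, by simp⟩

theorem isDyadic_zpow_mul (k : ℤ) (x : ℝ) : IsDyadic (2 ^ k * x) ↔ IsDyadic x := by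
  constructor
  · intro h
    have := (isDyadic_zpow (-k)).mul' h
    rwa [← mul_assoc, ← zpow_add₀ (by norm_num : (2 : ℝ) ≠ 0), neg_add_cancel, zpow_zero,
      one_mul] at this
  · intro h
    exact (isDyadic_zpow k).mul' h

theorem isDyadic_add_right {c : ℝ} (hc : IsDyadic c) (x : ℝ) : IsDyadic (x + c) ↔ IsDyadic x := by
  constructor
  · intro h
    have := h.sub' hc
    rwa [add_sub_cancel_right] at this
  · intro h
    exact h.add' hc

theorem isDyadic_neg_iff (x : ℝ) : IsDyadic (-x) ↔ IsDyadic x :=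
  ⟨fun h => by simpa using h.neg', fun h => h.neg'⟩

/-- affine on the interval with slope a power of two -/
def AffOn (f : ℝ → ℝ) (a b : ℝ) : Prop :=
  ∃ (k : ℤ) (c : ℝ), ∀ t ∈ Set.Icc a b, f t = 2 ^ k * t + c

/-- Dyadic piecewise linear homeomorphisms of the line. -/
def IsDPL (f : ℝ ≃o ℝ) : Prop :=
  (∀ x, IsDyadic (f x) ↔ IsDyadic x) ∧
    ∃ S : Finset ℝ, (∀ s ∈ S, IsDyadic s) ∧
      ∀ a b : ℝ, a < b → (∀ s ∈ S, s ∉ Set.Ioo a b) → AffOn f a b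

theorem IsDPL.one : IsDPL 1 := by
  refine ⟨fun x => Iff.rfl, ∅, by simp, fun a b _ _ => ⟨0, 0, fun t _ => ?_⟩⟩
  simp

theorem apply_mul' (f g : ℝ ≃o ℝ) (x : ℝ) : (f * g) x = f (g x) := rfl

theorem inv_apply' (f : ℝ ≃o ℝ) (x : ℝ) : f (f⁻¹ x) = x := f.apply_symm_apply x

theorem apply_inv' (f : ℝ ≃o ℝ) (x : ℝ) : f⁻¹ (f x) = x := f.symm_apply_apply x

theorem inv_eq_iff' (f : ℝ ≃o ℝ) (x y : ℝ) : f⁻¹ x = y ↔ x = f y := by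
  constructor
  · intro h
    rw [← h, inv_apply']
  · intro h
    rw [h, apply_inv']

theorem IsDPL.mul {f g : ℝ ≃o ℝ} (hf : IsDPL f) (hg : IsDPL g) : IsDPL (f * g) := by
  classical
  obtain ⟨hf1, S, hS, hfS⟩ := hf
  obtain ⟨hg1, T, hT, hgT⟩ := hg
  refine ⟨fun x => by rw [apply_mul', hf1, hg1], T ∪ S.image (g⁻¹ : ℝ ≃o ℝ), ?_, ?_⟩
  · intro s hs
    rcases Finset.mem_union.1 hs with hs | hs
    · exact hT s hs
    · obtain ⟨u, hu, rfl⟩ := Finset.mem_image.1 hs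
      rw [← hg1, inv_apply']
      exact hS u hu
  · intro a b hab hav
    obtain ⟨k, c, hk⟩ := hgT a b hab (fun s hs => hav s (Finset.mem_union_left _ hs))
    obtain ⟨l, d, hl⟩ := hfS (g a) (g b) (g.strictMono hab) (by
      intro s hs hmem
      refine hav (g⁻¹ s) (Finset.mem_union_right _ (Finset.mem_image_of_mem _ hs)) ?_
      constructor
      · rw [← g.lt_iff_lt, inv_apply']
        exact hmem.1
      · rw [← g.lt_iff_lt, inv_apply']
        exact hmem.2)
    refine ⟨l + k, 2 ^ l * c + d, fun t ht => ?_⟩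
    rw [apply_mul', hl (g t) ⟨g.monotone ht.1, g.monotone ht.2⟩, hk t ht,
      zpow_add₀ (by norm_num : (2 : ℝ) ≠ 0)]
    ring

theorem IsDPL.inv {f : ℝ ≃o ℝ} (hf : IsDPL f) : IsDPL f⁻¹ := by
  classical
  obtain ⟨hf1, S, hS, hfS⟩ := hf
  refine ⟨fun x => by rw [← hf1, inv_apply'], S.image f, ?_, ?_⟩
  · intro s hs
    obtain ⟨u, hu, rfl⟩ := Finset.mem_image.1 hs
    rw [hf1]
    exact hS u hu
  · intro a b hab hav
    obtain ⟨k, c, hk⟩ := hfS (f⁻¹ a) (f⁻¹ b) (f⁻¹.strictMono hab) (by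
      intro s hs hmem
      refine hav (f s) (Finset.mem_image_of_mem _ hs) ?_
      constructor
      · have := f.strictMono hmem.1
        rwa [inv_apply'] at this
      · have := f.strictMono hmem.2
        rwa [inv_apply'] at this)
    refine ⟨-k, -(2 ^ (-k) * c), fun t ht => ?_⟩
    have h1 := hk (f⁻¹ t) ⟨f⁻¹.monotone ht.1, f⁻¹.monotone ht.2⟩
    rw [inv_apply'] at h1
    have h2 : (2 : ℝ) ^ (-k) * 2 ^ k = 1 := by
      rw [← zpow_add₀ (by norm_num : (2 : ℝ) ≠ 0), neg_add_cancel, zpow_zero]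
    calc f⁻¹ t = ((2 : ℝ) ^ (-k) * 2 ^ k) * f⁻¹ t := by rw [h2, one_mul]
      _ = 2 ^ (-k) * (2 ^ k * f⁻¹ t + c) + -(2 ^ (-k) * c) := by ring
      _ = _ := by rw [← h1]

theorem IsDPL.pow {f : ℝ ≃o ℝ} (hf : IsDPL f) (n : ℕ) : IsDPL (f ^ n) := by
  induction n with
  | zero => exact IsDPL.one
  | succ n ih => rw [pow_succ]; exact ih.mul hf

theorem IsDPL.zpow {f : ℝ ≃o ℝ} (hf : IsDPL f) (n : ℤ) : IsDPL (f ^ n) := by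
  rcases Int.eq_nat_or_neg n with ⟨m, rfl | rfl⟩
  · rw [zpow_natCast]; exact hf.pow m
  · rw [zpow_neg, zpow_natCast]; exact (hf.pow m).inv

/-- Conjugation of a homeomorphism of the line by an affine map `y ↦ s * y + r`. -/
noncomputable def cj (s r : ℝ) (hs : s ≠ 0) (f : ℝ ≃o ℝ) : ℝ ≃o ℝ where
  toFun y := (f (s * y + r) - r) / s
  invFun y := (f⁻¹ (s * y + r) - r) / s
  left_inv y := by
    have : s * ((f (s * y + r) - r) / s) + r = f (s * y + r) := by field_simp; ring
    simp only [this, apply_inv']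
    field_simp
    ring
  right_inv y := by
    have : s * ((f⁻¹ (s * y + r) - r) / s) + r = f⁻¹ (s * y + r) := by field_simp; ring
    simp only [this, inv_apply']
    field_simp
    ring
  map_rel_iff' := by
    intro a b
    simp only [Equiv.coe_fn_mk]
    rcases lt_or_gt_of_ne hs with h | h
    · rw [div_le_div_right_of_neg h, sub_le_sub_iff_right, f.le_iff_le, add_le_add_iff_right,
        mul_le_mul_left_of_neg h]
    · rw [div_le_div_iff_of_pos_right h, sub_le_sub_iff_right, f.le_iff_le, add_le_add_iff_right,
        mul_le_mul_iff_right₀ h]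

theorem cj_apply (s r : ℝ) (hs : s ≠ 0) (f : ℝ ≃o ℝ) (y : ℝ) :
    cj s r hs f y = (f (s * y + r) - r) / s := rfl

theorem IsDPL.cj_pos {f : ℝ ≃o ℝ} (hf : IsDPL f) (j : ℤ) (r : ℝ) (hr : IsDyadic r)
    (hs : (2 : ℝ) ^ j ≠ 0) : IsDPL (cj (2 ^ j) r hs f) := by
  classical
  obtain ⟨hf1, S, hS, hfS⟩ := hf
  have hpos : (0 : ℝ) < 2 ^ j := by positivity
  have hdiv : ∀ x : ℝ, IsDyadic ((x - r) / 2 ^ j) ↔ IsDyadic x := by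
    intro x
    rw [div_eq_mul_inv, ← zpow_neg, mul_comm, isDyadic_zpow_mul, sub_eq_add_neg,
      isDyadic_add_right hr.neg']
  refine ⟨fun x => ?_, S.image (fun x => (x - r) / 2 ^ j), ?_, ?_⟩
  · rw [cj_apply, hdiv, hf1, isDyadic_add_right hr, isDyadic_zpow_mul]
  · intro s hs
    obtain ⟨u, hu, rfl⟩ := Finset.mem_image.1 hs
    rw [hdiv]
    exact hS u hu
  · intro a b hab hav
    obtain ⟨k, c, hk⟩ := hfS (2 ^ j * a + r) (2 ^ j * b + r) (by
        have := mul_lt_mul_of_pos_left hab hpos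
        linarith) (by
      intro s hs hmem
      refine hav ((s - r) / 2 ^ j) (Finset.mem_image_of_mem (fun x => (x - r) / 2 ^ j) hs) ?_
      constructor
      · rw [lt_div_iff₀ hpos]; linarith [hmem.1]
      · rw [div_lt_iff₀ hpos]; linarith [hmem.2])
    refine ⟨k, (2 ^ k * r + c - r) / 2 ^ j, fun t ht => ?_⟩
    rw [cj_apply, hk]
    · field_simp; ring
    · constructor
      · have := mul_le_mul_of_nonneg_left ht.1 hpos.le; linarith
      · have := mul_le_mul_of_nonneg_left ht.2 hpos.le; linarith

theorem IsDPL.cj_neg {f : ℝ ≃o ℝ} (hf : IsDPL f) (r : ℝ) (hr : IsDyadic r)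
    (hs : (-1 : ℝ) ≠ 0) : IsDPL (cj (-1) r hs f) := by
  classical
  obtain ⟨hf1, S, hS, hfS⟩ := hf
  have hdiv : ∀ x : ℝ, IsDyadic ((x - r) / -1) ↔ IsDyadic x := by
    intro x
    rw [div_neg, div_one, isDyadic_neg_iff, sub_eq_add_neg, isDyadic_add_right hr.neg']
  refine ⟨fun x => ?_, S.image (fun x => (x - r) / -1), ?_, ?_⟩
  · rw [cj_apply, hdiv, hf1, isDyadic_add_right hr, neg_one_mul, isDyadic_neg_iff]
  · intro s hs
    obtain ⟨u, hu, rfl⟩ := Finset.mem_image.1 hs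
    rw [hdiv]
    exact hS u hu
  · intro a b hab hav
    obtain ⟨k, c, hk⟩ := hfS (-1 * b + r) (-1 * a + r) (by linarith) (by
      intro s hs hmem
      refine hav ((s - r) / -1) (Finset.mem_image_of_mem (fun x => (x - r) / -1) hs) ?_
      have h1 := hmem.1
      have h2 := hmem.2
      constructor
      · rw [div_neg, div_one]; linarith
      · rw [div_neg, div_one]; linarith)
    refine ⟨k, -(2 ^ k * r + c - r), fun t ht => ?_⟩
    rw [cj_apply, hk]
    · ring
    · have h1 := ht.1
      have h2 := ht.2
      constructor <;> linarith

/-- The basic bump function on `[0,1]`. -/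
noncomputable def bfun (t : ℝ) : ℝ := min t (max (t / 2) (max (t - 1 / 4) (2 * t - 1)))

/-- The inverse of the basic bump function on `[0,1]`. -/
noncomputable def binv (t : ℝ) : ℝ := max t (min (2 * t) (min (t + 1 / 4) ((t + 1) / 2)))

theorem bfun_out {t : ℝ} (h : t ≤ 0 ∨ 1 ≤ t) : bfun t = t := by
  rw [bfun]
  apply min_eq_left
  rcases h with h | h
  · apply le_max_of_le_left; linarith
  · apply le_max_of_le_right; apply le_max_of_le_right; linarith

theorem bfun_1 {t : ℝ} (h : 0 ≤ t) (h' : t ≤ 1 / 2) : bfun t = t / 2 := by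
  rw [bfun, max_eq_left, min_eq_right]
  · linarith
  · apply max_le <;> linarith

theorem bfun_2 {t : ℝ} (h : 1 / 2 ≤ t) (h' : t ≤ 3 / 4) : bfun t = t - 1 / 4 := by
  rw [bfun, max_eq_left (by linarith : 2 * t - 1 ≤ t - 1 / 4), max_eq_right, min_eq_right]
  · linarith
  · linarith

theorem bfun_3 {t : ℝ} (h : 3 / 4 ≤ t) (h' : t ≤ 1) : bfun t = 2 * t - 1 := by
  rw [bfun, max_eq_right (by linarith : t - 1 / 4 ≤ 2 * t - 1), max_eq_right, min_eq_right]
  · linarith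
  · linarith

theorem binv_out {t : ℝ} (h : t ≤ 0 ∨ 1 ≤ t) : binv t = t := by
  rw [binv]
  apply max_eq_left
  rcases h with h | h
  · apply min_le_of_left_le; linarith
  · apply min_le_of_right_le; apply min_le_of_right_le; linarith

theorem binv_1 {t : ℝ} (h : 0 ≤ t) (h' : t ≤ 1 / 4) : binv t = 2 * t := by
  rw [binv, min_eq_left, max_eq_right]
  · linarith
  · apply le_min <;> linarith

theorem binv_2 {t : ℝ} (h : 1 / 4 ≤ t) (h' : t ≤ 1 / 2) : binv t = t + 1 / 4 := by
  rw [binv, min_eq_left (by linarith : t + 1 / 4 ≤ (t + 1) / 2), min_eq_right, max_eq_right]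
  · linarith
  · linarith

theorem binv_3 {t : ℝ} (h : 1 / 2 ≤ t) (h' : t ≤ 1) : binv t = (t + 1) / 2 := by
  rw [binv, min_eq_right (by linarith : (t + 1) / 2 ≤ t + 1 / 4), min_eq_right, max_eq_right]
  · linarith
  · linarith

theorem bfun_strictMono : StrictMono bfun := by
  intro b a hab
  apply min_lt_min hab
  apply max_lt_max (by linarith)
  apply max_lt_max <;> linarith

theorem binv_bfun (t : ℝ) : binv (bfun t) = t := by
  rcases le_total t 0 with h | h
  · rw [bfun_out (Or.inl h), binv_out (Or.inl h)]
  rcases le_total 1 t with h' | h'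
  · rw [bfun_out (Or.inr h'), binv_out (Or.inr h')]
  rcases le_total t (1 / 2) with h2 | h2
  · rw [bfun_1 h h2, binv_1] <;> linarith
  rcases le_total t (3 / 4) with h3 | h3
  · rw [bfun_2 h2 h3, binv_2] <;> linarith
  · rw [bfun_3 h3 h', binv_3] <;> linarith

theorem bfun_binv (t : ℝ) : bfun (binv t) = t := by
  rcases le_total t 0 with h | h
  · rw [binv_out (Or.inl h), bfun_out (Or.inl h)]
  rcases le_total 1 t with h' | h'
  · rw [binv_out (Or.inr h'), bfun_out (Or.inr h')]
  rcases le_total t (1 / 4) with h2 | h2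
  · rw [binv_1 h h2, bfun_1] <;> linarith
  rcases le_total t (1 / 2) with h3 | h3
  · rw [binv_2 h2 h3, bfun_2] <;> linarith
  · rw [binv_3 h3 h', bfun_3] <;> linarith

/-- The basic bump map on `[0,1]`. -/
noncomputable def bumpA : ℝ ≃o ℝ where
  toFun := bfun
  invFun := binv
  left_inv := binv_bfun
  right_inv := bfun_binv
  map_rel_iff' := bfun_strictMono.le_iff_le

theorem bumpA_out {t : ℝ} (h : t ≤ 0 ∨ 1 ≤ t) : bumpA t = t := bfun_out h

theorem bumpA_1 {t : ℝ} (h : 0 ≤ t) (h' : t ≤ 1 / 2) : bumpA t = t / 2 := bfun_1 h h'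

theorem bumpA_2 {t : ℝ} (h : 1 / 2 ≤ t) (h' : t ≤ 3 / 4) : bumpA t = t - 1 / 4 := bfun_2 h h'

theorem bumpA_3 {t : ℝ} (h : 3 / 4 ≤ t) (h' : t ≤ 1) : bumpA t = 2 * t - 1 := bfun_3 h h'

theorem isDPL_bumpA : IsDPL bumpA := by
  have d4 : IsDyadic (1 / 4 : ℝ) := ⟨1, 2, by norm_num⟩
  have d2 : IsDyadic (1 / 2 : ℝ) := ⟨1, 1, by norm_num⟩
  have d34 : IsDyadic (3 / 4 : ℝ) := ⟨3, 2, by norm_num⟩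
  have d1 : IsDyadic (1 : ℝ) := ⟨1, 0, by norm_num⟩
  have d0 : IsDyadic (0 : ℝ) := ⟨0, 0, by norm_num⟩
  constructor
  · intro x
    rcases le_total x 0 with h | h
    · rw [bumpA_out (Or.inl h)]
    rcases le_total 1 x with h' | h'
    · rw [bumpA_out (Or.inr h')]
    rcases le_total x (1 / 2) with h2 | h2
    · rw [bumpA_1 h h2]
      have := isDyadic_zpow_mul (-1) x
      rw [← this]
      have e : x / 2 = 2 ^ (-1 : ℤ) * x := by rw [zpow_neg_one]; ring
      rw [e]
    rcases le_total x (3 / 4) with h3 | h3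
    · rw [bumpA_2 h2 h3, sub_eq_add_neg, isDyadic_add_right d4.neg']
    · rw [bumpA_3 h3 h', sub_eq_add_neg, isDyadic_add_right d1.neg']
      have := isDyadic_zpow_mul 1 x
      rwa [zpow_one] at this
  · refine ⟨{0, 1 / 2, 3 / 4, 1}, ?_, ?_⟩
    · intro s hs
      simp only [Finset.mem_insert, Finset.mem_singleton] at hs
      rcases hs with rfl | rfl | rfl | rfl <;> assumption
    · intro a b hab hav
      have h0 := hav 0 (by simp)
      have h1 := hav (1 / 2) (by simp)
      have h2 := hav (3 / 4) (by simp)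
      have h3 := hav 1 (by simp)
      simp only [Set.mem_Ioo, not_and_or, not_lt] at h0 h1 h2 h3
      rcases h0 with h0 | h0
      swap
      · refine ⟨0, 0, fun t ht => ?_⟩
        rw [bumpA_out (Or.inl (ht.2.trans h0))]; simp
      rcases h1 with h1 | h1
      swap
      · refine ⟨-1, 0, fun t ht => ?_⟩
        rw [bumpA_1 (h0.trans ht.1) (ht.2.trans h1), zpow_neg_one]; ring
      rcases h2 with h2 | h2
      swap
      · refine ⟨0, -(1 / 4), fun t ht => ?_⟩
        rw [bumpA_2 (h1.trans ht.1) (ht.2.trans h2)]; simp; ring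
      rcases h3 with h3 | h3
      swap
      · refine ⟨1, -1, fun t ht => ?_⟩
        rw [bumpA_3 (h2.trans ht.1) (ht.2.trans h3), zpow_one]; ring
      · refine ⟨0, 0, fun t ht => ?_⟩
        rw [bumpA_out (Or.inr (h3.trans ht.1))]; simp

/-- `f` is supported in a compact subinterval of `(c, d)`. -/
def Cs (f : ℝ ≃o ℝ) (c d : ℝ) : Prop :=
  ∃ c1 d1 : ℝ, c < c1 ∧ d1 < d ∧ ∀ x, x ∉ Set.Icc c1 d1 → f x = x

theorem Cs.one (c d : ℝ) : Cs 1 c d := ⟨c + 1, d - 1, by linarith, by linarith, fun _ _ => rfl⟩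

theorem Cs.mono {f : ℝ ≃o ℝ} {c d c' d' : ℝ} (h : Cs f c d) (hc : c' ≤ c) (hd : d ≤ d') :
    Cs f c' d' := by
  obtain ⟨c1, d1, h1, h2, h3⟩ := h
  exact ⟨c1, d1, by linarith, by linarith, h3⟩

theorem Cs.mul {f g : ℝ ≃o ℝ} {c d : ℝ} (hf : Cs f c d) (hg : Cs g c d) : Cs (f * g) c d := by
  obtain ⟨c1, d1, h1, h2, h3⟩ := hf
  obtain ⟨c2, d2, h4, h5, h6⟩ := hg
  refine ⟨min c1 c2, max d1 d2, lt_min h1 h4, max_lt h2 h5, fun x hx => ?_⟩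
  rw [apply_mul', h6, h3]
  · intro h; exact hx ⟨(min_le_left _ _).trans h.1, h.2.trans (le_max_left _ _)⟩
  · intro h; exact hx ⟨(min_le_right _ _).trans h.1, h.2.trans (le_max_right _ _)⟩

theorem Cs.fix_left {f : ℝ ≃o ℝ} {c d x : ℝ} (h : Cs f c d) (hx : x ≤ c) : f x = x := by
  obtain ⟨c1, d1, h1, h2, h3⟩ := h
  exact h3 x (fun h => by linarith [h.1])

theorem Cs.fix_right {f : ℝ ≃o ℝ} {c d x : ℝ} (h : Cs f c d) (hx : d ≤ x) : f x = x := by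
  obtain ⟨c1, d1, h1, h2, h3⟩ := h
  exact h3 x (fun h => by linarith [h.2])

theorem Cs.conj {f : ℝ ≃o ℝ} {c d : ℝ} (hf : Cs f c d) (k : ℝ ≃o ℝ) :
    Cs (k * f * k⁻¹) (k c) (k d) := by
  obtain ⟨c1, d1, h1, h2, h3⟩ := hf
  refine ⟨k c1, k d1, k.strictMono h1, k.strictMono h2, fun x hx => ?_⟩
  rw [apply_mul', apply_mul', h3, inv_apply']
  intro h
  apply hx
  have e1 := k.monotone h.1
  have e2 := k.monotone h.2
  rw [inv_apply'] at e1 e2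
  exact ⟨e1, e2⟩

/-- A small bump around a point moving it to the right. -/
theorem exists_small_bump (s δ : ℝ) (hδ : 0 < δ) :
    ∃ f : ℝ ≃o ℝ, IsDPL f ∧ Cs f (s - δ) (s + δ) ∧ s < f s := by
  obtain ⟨j, hj⟩ := exists_nat_gt (4 / δ)
  have hj2 : (j : ℝ) < 2 ^ j := by exact_mod_cast Nat.lt_two_pow_self
  have hp : (0 : ℝ) < 2 ^ j := by positivity
  set q : ℝ := 2 ^ j with hq
  set z : ℤ := ⌈s * q⌉ - 1 with hz
  have hz1 : (z : ℝ) < s * q := by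
    have := Int.ceil_lt_add_one (s * q)
    rw [hz]; push_cast; linarith
  have hz2 : s * q ≤ z + 1 := by
    have := Int.le_ceil (s * q)
    rw [hz]; push_cast; linarith
  have hqd : 4 < q * δ := by
    rw [div_lt_iff₀ hδ] at hj
    nlinarith
  -- affine map y ↦ q/2 * y - z / 2
  have hs0 : (2 : ℝ) ^ ((j : ℤ) - 1) ≠ 0 := by positivity
  have hsq : (2 : ℝ) ^ ((j : ℤ) - 1) = q / 2 := by
    rw [zpow_sub₀ (by norm_num : (2 : ℝ) ≠ 0), zpow_natCast, zpow_one]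
  refine ⟨(cj (2 ^ ((j : ℤ) - 1)) (-((z : ℝ) / 2)) hs0 bumpA)⁻¹,
    (isDPL_bumpA.cj_pos _ _ (isDyadic_half z).neg' hs0).inv, ⟨z / q, (z + 2) / q, ?_, ?_, ?_⟩, ?_⟩
  · rw [lt_div_iff₀ hp]; nlinarith
  · rw [div_lt_iff₀ hp]; nlinarith
  · intro x hx
    rw [inv_eq_iff', cj_apply, bumpA_out, hsq]
    · field_simp; ring
    · rw [hsq]
      by_contra hcon
      push Not at hcon
      apply hx
      constructor
      · rw [div_le_iff₀ hp]; linarith [hcon.1]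
      · rw [le_div_iff₀ hp]; linarith [hcon.2]
  · rw [← (cj (2 ^ ((j : ℤ) - 1)) (-((z : ℝ) / 2)) hs0 bumpA).lt_iff_lt, inv_apply', cj_apply, hsq,
      div_lt_iff₀ (by positivity), sub_lt_iff_lt_add]
    have h1 : 0 < q / 2 * s + -((z : ℝ) / 2) := by linarith
    have h2 : q / 2 * s + -((z : ℝ) / 2) ≤ 1 / 2 := by linarith
    rw [bumpA_1 h1.le h2]
    linarith

/-- Points of an interval can be pushed arbitrarily far to the right. -/
theorem exists_push (c d x y : ℝ) (hcx : c < x) (hxd : x < d) (hyd : y < d) :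
    ∃ w : ℝ ≃o ℝ, IsDPL w ∧ Cs w c d ∧ y < w x := by
  by_contra hcon
  push Not at hcon
  let O : Set ℝ := {z | ∃ w : ℝ ≃o ℝ, IsDPL w ∧ Cs w c d ∧ w x = z}
  have hxO : x ∈ O := ⟨1, IsDPL.one, Cs.one c d, rfl⟩
  have hbdd : BddAbove O := ⟨y, by rintro z ⟨w, h1, h2, rfl⟩; exact hcon w h1 h2⟩
  set s := sSup O with hs
  have hsy : s ≤ y := csSup_le ⟨x, hxO⟩ (by rintro z ⟨w, h1, h2, rfl⟩; exact hcon w h1 h2)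
  have hxs : x ≤ s := le_csSup hbdd hxO
  obtain ⟨f, hf, hfc, hfs⟩ := exists_small_bump s (min (s - c) (d - s))
    (lt_min (by linarith) (by linarith))
  have hfc' : Cs f c d := hfc.mono (by linarith [min_le_left (s - c) (d - s)])
    (by linarith [min_le_right (s - c) (d - s)])
  have h1 : f⁻¹ s < s := by
    rw [← f.lt_iff_lt, inv_apply']; exact hfs
  obtain ⟨z, ⟨w, hw1, hw2, rfl⟩, hz⟩ := exists_lt_of_lt_csSup ⟨x, hxO⟩ h1
  have h2 : s < f (w x) := by
    rw [← f.lt_iff_lt, inv_apply'] at hz; exact hz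
  exact absurd (le_csSup hbdd ⟨f * w, hf.mul hw1, hfc'.mul hw2, rfl⟩) (not_le.2 h2)
/-! ### Relation with Thompson's group -/

theorem exists_piece (m : ℕ) (x : Fin (m + 1) → ℝ) (t : ℝ) (h0 : x 0 ≤ t)
    (h1 : t < x (Fin.last m)) : ∃ i : Fin m, x i.castSucc ≤ t ∧ t < x i.succ := by
  by_contra hcon
  push Not at hcon
  have : ∀ i : Fin (m + 1), x i ≤ t := by
    intro i
    induction i using Fin.induction with
    | zero => exact h0
    | succ i ih => exact hcon i ih
  exact absurd (this (Fin.last m)) (not_le.2 h1)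

theorem InH.isDPL {f : ℝ ≃o ℝ} (hf : InH f) : IsDPL f := by
  classical
  obtain ⟨⟨hout, m, x, hx0, hx1, hmono, hdy, hpc⟩, k, ε, hε, hk0, hk1⟩ := hf
  have f0 : f 0 = 0 := by
    have := hk0 0 ⟨le_refl _, hε.le⟩
    simpa using this
  have f1 : f 1 = 1 := by
    have := hk1 1 ⟨by linarith, le_refl _⟩
    simpa using this
  have houtc : ∀ t, t ≤ 0 ∨ 1 ≤ t → f t = t := by
    intro t ht
    by_cases h : t ∈ Set.Icc (0 : ℝ) 1
    · rcases ht with ht | ht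
      · have : t = 0 := le_antisymm ht h.1
        rw [this, f0]
      · have : t = 1 := le_antisymm h.2 ht
        rw [this, f1]
    · exact hout t h
  have hfx : ∀ i, IsDyadic (f (x i)) := by
    intro i
    induction i using Fin.induction with
    | zero => rw [hx0, f0]; exact ⟨0, 0, by simp⟩
    | succ i ih =>
      obtain ⟨l, c, hl⟩ := hpc i
      have hlt : x i.castSucc ≤ x i.succ := hmono.monotone (Fin.castSucc_lt_succ).le
      have e1 := hl (x i.castSucc) ⟨le_refl _, hlt⟩
      have e2 := hl (x i.succ) ⟨hlt, le_refl _⟩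
      have e3 : f (x i.succ) = 2 ^ l * (x i.succ - x i.castSucc) + f (x i.castSucc) := by
        rw [e1, e2]; ring
      rw [e3]
      exact ((isDyadic_zpow l).mul' ((hdy _).sub' (hdy _))).add' ih
  refine ⟨fun t => ?_, Finset.univ.image x, ?_, ?_⟩
  · by_cases ht : t ≤ 0 ∨ 1 ≤ t
    · rw [houtc t ht]
    · push Not at ht
      obtain ⟨i, hi1, hi2⟩ := exists_piece m x t (by rw [hx0]; exact ht.1.le)
        (by rw [hx1]; exact ht.2)
      obtain ⟨l, c, hl⟩ := hpc i
      have e1 := hl t ⟨hi1, hi2.le⟩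
      have e2 := hl (x i.castSucc) ⟨le_refl _, hi1.trans hi2.le⟩
      have hc : IsDyadic c := by
        have : c = f (x i.castSucc) - 2 ^ l * x i.castSucc := by rw [e2]; ring
        rw [this]
        exact (hfx _).sub' ((isDyadic_zpow l).mul' (hdy _))
      rw [e1, isDyadic_add_right hc, isDyadic_zpow_mul]
  · intro s hs
    obtain ⟨i, _, rfl⟩ := Finset.mem_image.1 hs
    exact hdy i
  · intro a b hab hav
    have hav' : ∀ i, x i ≤ a ∨ b ≤ x i := by
      intro i
      have := hav (x i) (Finset.mem_image_of_mem _ (Finset.mem_univ i))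
      simpa only [Set.mem_Ioo, not_and_or, not_lt] using this
    rcases hav' 0 with h0 | h0
    swap
    · rw [hx0] at h0
      exact ⟨0, 0, fun t ht => by rw [houtc t (Or.inl (ht.2.trans h0))]; simp⟩
    rcases hav' (Fin.last m) with h1 | h1
    · rw [hx1] at h1
      exact ⟨0, 0, fun t ht => by rw [houtc t (Or.inr (h1.trans ht.1))]; simp⟩
    obtain ⟨i, hi1, hi2⟩ := exists_piece m x a h0 (hab.trans_le h1)
    have hb : b ≤ x i.succ := by
      rcases hav' i.succ with h | h
      · linarith
      · exact h
    obtain ⟨l, c, hl⟩ := hpc i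
    exact ⟨l, c, fun t ht => hl t ⟨hi1.trans ht.1, ht.2.trans hb⟩⟩

theorem IsDPL.inH {f : ℝ ≃o ℝ} (hf : IsDPL f) (hc : Cs f 0 1) : InH f := by
  classical
  have hcs := hc
  obtain ⟨c1, d1, hc1, hd1, hfix⟩ := hc
  obtain ⟨hf1, S, hS, hfS⟩ := hf
  refine ⟨⟨fun t ht => ?_, ?_⟩, 0, min c1 (1 - d1) / 2, ?_, ?_, ?_⟩
  · apply by_contra
    intro hne
    apply ht
    by_contra hcon
    rcases not_and_or.1 hcon with h | h
    · exact hne (hcs.fix_left (not_le.1 h).le)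
    · exact hne (hcs.fix_right (not_le.1 h).le)
  · let T : Finset ℝ := insert 0 (insert 1 (S.filter (fun s => 0 < s ∧ s < 1)))
    have hT0 : (0 : ℝ) ∈ T := Finset.mem_insert_self _ _
    have hT1 : (1 : ℝ) ∈ T := Finset.mem_insert_of_mem (Finset.mem_insert_self _ _)
    have hTI : ∀ t ∈ T, 0 ≤ t ∧ t ≤ 1 := by
      intro t ht
      simp only [T, Finset.mem_insert, Finset.mem_filter] at ht
      rcases ht with rfl | rfl | ⟨_, h1, h2⟩
      · norm_num
      · norm_num
      · exact ⟨h1.le, h2.le⟩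
    have hTd : ∀ t ∈ T, IsDyadic t := by
      intro t ht
      simp only [T, Finset.mem_insert, Finset.mem_filter] at ht
      rcases ht with rfl | rfl | ⟨h, _, _⟩
      · exact ⟨0, 0, by simp⟩
      · exact ⟨1, 0, by simp⟩
      · exact hS t h
    have hcard : 0 < T.card := Finset.card_pos.2 ⟨0, hT0⟩
    obtain ⟨m, hm⟩ : ∃ m, T.card = m + 1 := ⟨T.card - 1, by omega⟩
    have hsurj : ∀ t ∈ T, ∃ i, T.orderEmbOfFin hm i = t := by
      intro t ht
      have : t ∈ Set.range (T.orderEmbOfFin hm) := by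
        rw [Finset.range_orderEmbOfFin]; exact ht
      exact this
    have hmem : ∀ i, T.orderEmbOfFin hm i ∈ T := fun i => Finset.orderEmbOfFin_mem _ _ _
    refine ⟨m, T.orderEmbOfFin hm, ?_, ?_, (T.orderEmbOfFin hm).strictMono,
      fun i => hTd _ (hmem i), ?_⟩
    · obtain ⟨i, hi⟩ := hsurj 0 hT0
      apply le_antisymm
      · rw [← hi]; exact (T.orderEmbOfFin hm).monotone (Fin.zero_le i)
      · exact (hTI _ (hmem _)).1
    · obtain ⟨i, hi⟩ := hsurj 1 hT1
      apply le_antisymm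
      · exact (hTI _ (hmem _)).2
      · rw [← hi]; exact (T.orderEmbOfFin hm).monotone (Fin.le_last i)
    · intro i
      refine hfS _ _ ((T.orderEmbOfFin hm).strictMono Fin.castSucc_lt_succ) ?_
      intro s hs hsm
      have h0 := (hTI _ (hmem i.castSucc)).1
      have h1 := (hTI _ (hmem i.succ)).2
      have hsT : s ∈ T := by
        simp only [T, Finset.mem_insert, Finset.mem_filter]
        right; right
        exact ⟨hs, lt_of_le_of_lt h0 hsm.1, lt_of_lt_of_le hsm.2 h1⟩
      obtain ⟨j, rfl⟩ := hsurj s hsT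
      have a1 := (T.orderEmbOfFin hm).lt_iff_lt.1 hsm.1
      have a2 := (T.orderEmbOfFin hm).lt_iff_lt.1 hsm.2
      rw [Fin.lt_def] at a1 a2
      simp at a1 a2
      omega
  · have : 0 < min c1 (1 - d1) := lt_min hc1 (by linarith)
    linarith
  · intro t ht
    rw [hfix, zpow_zero, one_mul]
    intro h
    have h1 : 0 < min c1 (1 - d1) := lt_min hc1 (by linarith)
    have h2 := min_le_left c1 (1 - d1)
    linarith [h.1, ht.2]
  · intro t ht
    rw [hfix, zpow_zero, one_mul]
    · ring
    intro h
    have h1 : 0 < min c1 (1 - d1) := lt_min hc1 (by linarith)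
    have h2 := min_le_right c1 (1 - d1)
    linarith [h.2, ht.1]

/-- one-sided germs with slope `2 ^ k` at a fixed point `z`, in the direction `η = ± 1` -/
def Germ (z η : ℝ) (f : ℝ ≃o ℝ) (k : ℤ) : Prop :=
  ∃ δ : ℝ, 0 < δ ∧ ∀ t ∈ Set.Icc (0 : ℝ) δ, f (z + η * t) = z + η * (2 ^ k * t)

theorem Germ.mul {z η : ℝ} {f g : ℝ ≃o ℝ} {k l : ℤ} (hf : Germ z η f k) (hg : Germ z η g l) :
    Germ z η (f * g) (k + l) := by
  obtain ⟨δ, hδ, h⟩ := hf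
  obtain ⟨δ', hδ', h'⟩ := hg
  have hp : (0 : ℝ) < 2 ^ l := by positivity
  refine ⟨min δ' (δ / 2 ^ l), by positivity, fun t ht => ?_⟩
  rw [apply_mul', h' t ⟨ht.1, ht.2.trans (min_le_left _ _)⟩, h,
    zpow_add₀ (by norm_num : (2 : ℝ) ≠ 0), mul_assoc]
  refine ⟨mul_nonneg hp.le ht.1, ?_⟩
  have := ht.2.trans (min_le_right _ _)
  rw [le_div_iff₀ hp] at this
  linarith

theorem Germ.inv {z η : ℝ} {f : ℝ ≃o ℝ} {k : ℤ} (hf : Germ z η f k) :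
    Germ z η f⁻¹ (-k) := by
  obtain ⟨δ, hδ, h⟩ := hf
  have hp : (0 : ℝ) < 2 ^ k := by positivity
  refine ⟨δ * 2 ^ k, by positivity, fun t ht => ?_⟩
  rw [inv_eq_iff', h, ← mul_assoc ((2 : ℝ) ^ k), ← zpow_add₀ (by norm_num : (2 : ℝ) ≠ 0),
    add_neg_cancel, zpow_zero, one_mul]
  rw [zpow_neg, inv_mul_eq_div]
  exact ⟨div_nonneg ht.1 hp.le, by rw [div_le_iff₀ hp]; exact ht.2⟩

theorem Germ.pow {z η : ℝ} {f : ℝ ≃o ℝ} {k : ℤ} (hf : Germ z η f k) (n : ℕ) :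
    Germ z η (f ^ n) (n * k) := by
  induction n with
  | zero => exact ⟨1, one_pos, fun t _ => by simp⟩
  | succ n ih =>
    rw [pow_succ]
    have := ih.mul hf
    convert this using 1
    push_cast
    ring

theorem Germ.zpow {z η : ℝ} {f : ℝ ≃o ℝ} {k : ℤ} (hf : Germ z η f k) (n : ℤ) :
    Germ z η (f ^ n) (n * k) := by
  rcases Int.eq_nat_or_neg n with ⟨m, rfl | rfl⟩
  · rw [zpow_natCast]; exact hf.pow m
  · rw [zpow_neg, zpow_natCast, neg_mul]; exact (hf.pow m).inv

theorem pow_fix {f : ℝ ≃o ℝ} {x : ℝ} (h : f x = x) (n : ℕ) : (f ^ n) x = x := by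
  induction n with
  | zero => rfl
  | succ n ih => rw [pow_succ, apply_mul', h, ih]

theorem inv_fix {f : ℝ ≃o ℝ} {x : ℝ} (h : f x = x) : f⁻¹ x = x := by
  rw [inv_eq_iff', h]

theorem zpow_fix {f : ℝ ≃o ℝ} {x : ℝ} (h : f x = x) (n : ℤ) : (f ^ n) x = x := by
  rcases Int.eq_nat_or_neg n with ⟨m, rfl | rfl⟩
  · rw [zpow_natCast]; exact pow_fix h m
  · rw [zpow_neg, zpow_natCast]; exact inv_fix (pow_fix h m)

/-- The local behaviour of an element of `H` at an interior point is realised by a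
compactly supported dyadic map. -/
theorem InH.exists_compact {f : ℝ ≃o ℝ} (hf : InH f) (x : ℝ) (hx0 : 0 < x) (hx1 : x < 1) :
    ∃ φ : ℝ ≃o ℝ, IsDPL φ ∧ Cs φ 0 1 ∧ φ x = f x := by
  have hdpl := hf.isDPL
  obtain ⟨⟨hout, -⟩, k, ε, hε, hk0, hk1⟩ := hf
  have hmin : 0 < min x (1 - x) := lt_min hx0 (by linarith)
  obtain ⟨j, hj⟩ := exists_pow_lt_of_lt_one (lt_min hmin one_pos) (by norm_num : (1 / 2 : ℝ) < 1)
  set q : ℝ := (1 / 2) ^ j with hq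
  have hqpos : 0 < q := by positivity
  have hqx : q < x := hj.trans_le ((min_le_left _ _).trans (min_le_left _ _))
  have hqx' : q < 1 - x := hj.trans_le ((min_le_left _ _).trans (min_le_right _ _))
  have hs0 : (2 : ℝ) ^ (j : ℤ) ≠ 0 := by positivity
  have hsq : (2 : ℝ) ^ (j : ℤ) = 1 / q := by
    rw [hq, zpow_natCast]
    simp
  have hqd : IsDyadic (1 / q) := by rw [← hsq]; exact isDyadic_zpow _
  have h0d : IsDyadic (0 : ℝ) := ⟨0, 0, by simp⟩
  have h1d : IsDyadic (1 : ℝ) := ⟨1, 0, by simp⟩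
  let A0 := cj (2 ^ (j : ℤ)) 0 hs0 bumpA
  let A1 := cj (2 ^ (j : ℤ)) (1 - 1 / q) hs0 bumpA
  have a0 : ∀ y, A0 y = bumpA (y / q) * q := by
    intro y
    simp only [A0, cj_apply, hsq]
    rw [show 1 / q * y + 0 = y / q by ring]
    field_simp
    ring
  have a1 : ∀ y, A1 y = bumpA ((y - 1) / q + 1) * q + 1 - q := by
    intro y
    simp only [A1, cj_apply, hsq]
    rw [show 1 / q * y + (1 - 1 / q) = (y - 1) / q + 1 by ring]
    field_simp
    ring
  have a0fix : ∀ y, y ≤ 0 ∨ q ≤ y → A0 y = y := by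
    intro y hy
    rw [a0, bumpA_out]
    · field_simp
    · rcases hy with h | h
      · left; exact div_nonpos_of_nonpos_of_nonneg h hqpos.le
      · right; rwa [le_div_iff₀ hqpos, one_mul]
  have a1fix : ∀ y, y ≤ 1 - q ∨ 1 ≤ y → A1 y = y := by
    intro y hy
    rw [a1, bumpA_out]
    · field_simp; ring
    · rcases hy with h | h
      · left
        have : (y - 1) / q ≤ -1 := by rw [div_le_iff₀ hqpos]; linarith
        linarith
      · right
        have : 0 ≤ (y - 1) / q := div_nonneg (by linarith) hqpos.le
        linarith
  have hq1 : q < 1 := by linarith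
  have g00 : Germ 0 1 A0 (-1) := by
    refine ⟨q / 2, by positivity, fun t ht => ?_⟩
    rw [a0, bumpA_1, zpow_neg_one]
    · field_simp
      ring
    · rw [zero_add, one_mul]; exact div_nonneg ht.1 hqpos.le
    · rw [zero_add, one_mul, div_le_iff₀ hqpos]; linarith [ht.2]
  have g01 : Germ 1 (-1) A0 0 := by
    refine ⟨1 - q, by linarith, fun t ht => ?_⟩
    rw [a0fix _ (Or.inr (by linarith [ht.2])), zpow_zero, one_mul]
  have g10 : Germ 0 1 A1 0 := by
    refine ⟨1 - q, by linarith, fun t ht => ?_⟩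
    rw [a1fix _ (Or.inl (by linarith [ht.2])), zpow_zero]
    ring
  have g11 : Germ 1 (-1) A1 1 := by
    refine ⟨q / 4, by positivity, fun t ht => ?_⟩
    have e1 : (1 + -1 * t - 1) / q = - (t / q) := by ring
    have e2 : t / q ≤ 1 / 4 := by rw [div_le_iff₀ hqpos]; linarith [ht.2]
    have e3 : 0 ≤ t / q := div_nonneg ht.1 hqpos.le
    rw [a1, e1, bumpA_3 (by linarith) (by linarith), zpow_one]
    field_simp
    ring
  have gf0 : Germ 0 1 f k := by
    refine ⟨ε, hε, fun t ht => ?_⟩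
    rw [zero_add, one_mul, zero_add, one_mul]
    exact hk0 t ht
  have gf1 : Germ 1 (-1) f k := by
    refine ⟨ε, hε, fun t ht => ?_⟩
    rw [hk1 (1 + -1 * t) ⟨by linarith [ht.2], by linarith [ht.1]⟩]
    ring
  have dA0 : IsDPL A0 := isDPL_bumpA.cj_pos _ _ h0d hs0
  have dA1 : IsDPL A1 := isDPL_bumpA.cj_pos _ _ (h1d.sub' hqd) hs0
  refine ⟨f * A0 ^ k * A1 ^ (-k), (hdpl.mul (dA0.zpow k)).mul (dA1.zpow _), ?_, ?_⟩
  · have G0 := (gf0.mul (g00.zpow k)).mul (g10.zpow (-k))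
    have G1 := (gf1.mul (g01.zpow k)).mul (g11.zpow (-k))
    rw [show k + k * -1 + -k * 0 = 0 by ring] at G0
    rw [show k + k * 0 + -k * 1 = 0 by ring] at G1
    obtain ⟨δ, hδ, h⟩ := G0
    obtain ⟨δ', hδ', h'⟩ := G1
    refine ⟨δ, 1 - δ', hδ, by linarith, fun y hy => ?_⟩
    by_cases hy0 : y < 0
    · rw [apply_mul', apply_mul', zpow_fix (a1fix y (Or.inl (by linarith))),
        zpow_fix (a0fix y (Or.inl hy0.le)), hout y (fun h => by linarith [h.1])]
    by_cases hy1 : 1 < y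
    · rw [apply_mul', apply_mul', zpow_fix (a1fix y (Or.inr hy1.le)),
        zpow_fix (a0fix y (Or.inr (by linarith))), hout y (fun h => by linarith [h.2])]
    push Not at hy0 hy1
    rcases not_and_or.1 hy with h2 | h2
    · have := h y ⟨hy0, by linarith⟩
      simpa using this
    · have := h' (1 - y) ⟨by linarith, by linarith⟩
      simpa using this
  · rw [apply_mul', apply_mul', zpow_fix (a1fix x (Or.inl (by linarith))),
      zpow_fix (a0fix x (Or.inr (by linarith)))]
/-! ### Localised elements -/

/-- Isometries of the line preserving the two classes of half-integers. -/
def Good (s τ : ℤ) : Prop := (s = 1 ∨ s = -1) ∧ Even τ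

/-- The action of an isometry on the line. -/
noncomputable def sg (s τ : ℤ) (y : ℝ) : ℝ := (s : ℝ) * y + (τ : ℝ) / 2

/-- The isometry respects the label at the index `i`. -/
def Pm (e : ℤ → ℤ) (i s τ : ℤ) : Prop := e (s * i + τ) = s * e i

theorem good_id : Good 1 0 := ⟨Or.inl rfl, by simp⟩

theorem sg_id (y : ℝ) : sg 1 0 y = y := by simp [sg]

theorem Pm_id (e : ℤ → ℤ) (i : ℤ) : Pm e i 1 0 := by simp [Pm]

theorem sg_inj {s τ : ℤ} (h : Good s τ) {x y : ℝ} (hxy : sg s τ x = sg s τ y) : x = y := by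
  unfold sg at hxy
  rcases h.1 with rfl | rfl
  · push_cast at hxy; linarith
  · push_cast at hxy; linarith

theorem sg_cover (m : ℤ) (w : ℝ) : ∃ s τ : ℤ, Good s τ ∧
    ∃ y ∈ Set.Icc ((m : ℝ) / 2) (((m : ℝ) + 1) / 2), w = sg s τ y := by
  have h1 := Int.floor_le (2 * w)
  have h2 := Int.lt_floor_add_one (2 * w)
  set n : ℤ := ⌊2 * w⌋ with hn
  rcases Int.even_or_odd (n - m) with h | h
  · refine ⟨1, n - m, ⟨Or.inl rfl, h⟩, w - ((n : ℝ) - m) / 2, ⟨?_, ?_⟩, ?_⟩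
    · linarith
    · linarith
    · unfold sg; push_cast; ring
  · refine ⟨-1, n + m + 1, ⟨Or.inr rfl, ?_⟩, ((n : ℝ) + m + 1) / 2 - w, ⟨?_, ?_⟩, ?_⟩
    · obtain ⟨k, hk⟩ := h
      exact ⟨k + m + 1, by omega⟩
    · linarith
    · linarith
    · unfold sg; push_cast; ring

theorem sg_unique {m s τ s' τ' : ℤ} (h : Good s τ) (h' : Good s' τ') {y y' : ℝ}
    (hy : y ∈ Set.Icc ((m : ℝ) / 2) (((m : ℝ) + 1) / 2))
    (hy' : y' ∈ Set.Ioo ((m : ℝ) / 2) (((m : ℝ) + 1) / 2))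
    (he : sg s τ y = sg s' τ' y') : s = s' ∧ τ = τ' ∧ y = y' := by
  obtain ⟨hs, k, rfl⟩ := h
  obtain ⟨hs', k', rfl⟩ := h'
  obtain ⟨a1, a2⟩ := hy
  obtain ⟨b1, b2⟩ := hy'
  unfold sg at he
  rcases hs with rfl | rfl <;> rcases hs' with rfl | rfl <;> push_cast at he
  · have e1 : (k : ℝ) < k' + 1 := by linarith
    have e2 : (k' : ℝ) < k + 1 := by linarith
    norm_cast at e1 e2
    have : k = k' := by omega
    subst this
    exact ⟨rfl, rfl, by linarith⟩
  · exfalso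
    have e1 : (m : ℝ) < k' - k := by linarith
    have e2 : (k' : ℝ) - k < m + 1 := by linarith
    norm_cast at e1 e2
    omega
  · exfalso
    have e1 : (m : ℝ) < k - k' := by linarith
    have e2 : (k : ℝ) - k' < m + 1 := by linarith
    norm_cast at e1 e2
    omega
  · have e1 : (k : ℝ) < k' + 1 := by linarith
    have e2 : (k' : ℝ) < k + 1 := by linarith
    norm_cast at e1 e2
    have : k = k' := by omega
    subst this
    exact ⟨rfl, rfl, by linarith⟩

/-- A homeomorphism fixing the endpoints of the image of an interval preserves it. -/
theorem sg_preserve {s τ : ℤ} (h : Good s τ) {u v y : ℝ} (hy : y ∈ Set.Icc u v) (t : ℝ ≃o ℝ)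
    (hu : t (sg s τ u) = sg s τ u) (hv : t (sg s τ v) = sg s τ v) :
    ∃ y' ∈ Set.Icc u v, t (sg s τ y) = sg s τ y' := by
  obtain ⟨hs, -⟩ := h
  obtain ⟨h1, h2⟩ := hy
  rcases hs with rfl | rfl
  · refine ⟨t (sg 1 τ y) - (τ : ℝ) / 2, ⟨?_, ?_⟩, by simp [sg]⟩
    · have : t (sg 1 τ u) ≤ t (sg 1 τ y) := t.monotone (by simp [sg]; linarith)
      rw [hu] at this
      simp only [sg, Int.cast_one, one_mul] at this ⊢
      linarith
    · have : t (sg 1 τ y) ≤ t (sg 1 τ v) := t.monotone (by simp [sg]; linarith)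
      rw [hv] at this
      simp only [sg, Int.cast_one, one_mul] at this ⊢
      linarith
  · refine ⟨(τ : ℝ) / 2 - t (sg (-1) τ y), ⟨?_, ?_⟩, by simp [sg]⟩
    · have : t (sg (-1) τ y) ≤ t (sg (-1) τ u) := t.monotone (by simp [sg]; linarith)
      rw [hu] at this
      simp only [sg, Int.cast_neg, Int.cast_one] at this ⊢
      linarith
    · have : t (sg (-1) τ v) ≤ t (sg (-1) τ y) := t.monotone (by simp [sg]; linarith)
      rw [hv] at this
      simp only [sg, Int.cast_neg, Int.cast_one] at this ⊢
      linarith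

/-- The group `G` contains, for every index `m` and every compactly supported dyadic map on the
unit interval centred at `m / 2`, an element acting accordingly on all copies. -/
def ThetaProp (e : ℤ → ℤ) (G : Subgroup (ℝ ≃o ℝ)) : Prop :=
  ∀ (m : ℤ) (φ : ℝ ≃o ℝ), IsDPL φ → Cs φ (((m : ℝ) - 1) / 2) (((m : ℝ) + 1) / 2) →
    ∃ Θ ∈ G, ∀ s τ : ℤ, Good s τ → Pm e m s τ →
      ∀ y ∈ Set.Icc (((m : ℝ) - 1) / 2) (((m : ℝ) + 1) / 2), Θ (sg s τ y) = sg s τ (φ y)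

/-- Existence of elements of `G` localised at the copies selected by `P` of the interval
`(c, d)` in the gap `[m / 2, (m + 1) / 2]`. -/
def Loc (G : Subgroup (ℝ ≃o ℝ)) (m : ℤ) (P : ℤ → ℤ → Prop) (c d : ℝ) : Prop :=
  ∀ φ : ℝ ≃o ℝ, IsDPL φ → Cs φ c d → ∀ x : ℝ, ∃ t ∈ G, t x = φ x ∧
    ∃ c1 d1 : ℝ, c < c1 ∧ d1 < d ∧ ∀ s τ : ℤ, Good s τ →
      ∀ y ∈ Set.Icc ((m : ℝ) / 2) (((m : ℝ) + 1) / 2),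
        t (sg s τ y) ≠ sg s τ y → P s τ ∧ y ∈ Set.Icc c1 d1

theorem loc_base {e : ℤ → ℤ} (he : ∀ n, e n = 1 ∨ e n = -1) {G : Subgroup (ℝ ≃o ℝ)}
    (hΘ : ThetaProp e G) (m : ℤ) (c d : ℝ) (hc : (m : ℝ) / 2 ≤ c) (hd : d ≤ ((m : ℝ) + 1) / 2) :
    Loc G m (Pm e m) c d := by
  intro φ hφ hcs x
  by_cases hx : φ x = x
  · exact ⟨1, G.one_mem, hx.symm, c + 1, d - 1, by linarith, by linarith,
      fun s τ _ y _ h => absurd rfl h⟩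
  have hcs' := hcs
  obtain ⟨c1, d1, hc1, hd1, hfix⟩ := hcs
  obtain ⟨Θ, hΘG, hact⟩ := hΘ m φ hφ (hcs'.mono (by linarith) hd)
  have hxI : x ∈ Set.Icc c1 d1 := by
    by_contra h
    exact hx (hfix x h)
  refine ⟨Θ, hΘG, ?_, c1, d1, hc1, hd1, ?_⟩
  · have := hact 1 0 good_id (Pm_id e m) x ⟨by linarith [hxI.1], by linarith [hxI.2]⟩
    rwa [sg_id, sg_id] at this
  · intro s τ hg y hy hne
    by_cases hP : Pm e m s τ
    · refine ⟨hP, ?_⟩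
      by_contra h
      apply hne
      rw [hact s τ hg hP y ⟨by linarith [hy.1], hy.2⟩, hfix y h]
    · exfalso
      apply hne
      have hg' : Good (-s) (τ + 2 * s * m) := by
        obtain ⟨h1, h2⟩ := hg
        refine ⟨by omega, ?_⟩
        obtain ⟨k, rfl⟩ := h2
        exact ⟨k + s * m, by ring⟩
      have hP' : Pm e m (-s) (τ + 2 * s * m) := by
        unfold Pm at hP ⊢
        rw [show -s * m + (τ + 2 * s * m) = s * m + τ by ring]
        rcases hg.1 with rfl | rfl <;> rcases he (m) with h1 | h1 <;>
          rcases he (1 * m + τ) with h2 | h2 <;> rcases he (-1 * m + τ) with h3 | h3 <;>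
          simp_all
      have hsg : sg s τ y = sg (-s) (τ + 2 * s * m) ((m : ℝ) - y) := by
        unfold sg; push_cast; ring
      rw [hsg, hact _ _ hg' hP' _ ⟨by linarith [hy.2], by linarith [hy.1]⟩,
        hcs'.fix_left (by linarith [hy.1])]

theorem loc_comm {G : Subgroup (ℝ ≃o ℝ)} {m : ℤ} {P Q : ℤ → ℤ → Prop} {c d : ℝ}
    (hc : (m : ℝ) / 2 ≤ c) (hd : d ≤ ((m : ℝ) + 1) / 2)
    (hP : Loc G m P c d) (hQ : Loc G m Q c d) :
    Loc G m (fun s τ => P s τ ∧ Q s τ) c d := by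
  intro φ hφ hcs x
  by_cases hx : φ x = x
  · exact ⟨1, G.one_mem, hx.symm, c + 1, d - 1, by linarith, by linarith,
      fun s τ _ y _ h => absurd rfl h⟩
  have hxc : c < x := by
    by_contra h
    exact hx (hcs.fix_left (not_lt.1 h))
  have hxd : x < d := by
    by_contra h
    exact hx (hcs.fix_right (not_lt.1 h))
  obtain ⟨f, hfG, hfx, c1, d1, hc1, hd1, hf⟩ := hP φ hφ hcs x
  obtain ⟨w0, hw0, hw0c, hw0x⟩ := exists_push c d x d1 hxc hxd hd1
  obtain ⟨w, hwG, hwx, c2, d2, hc2, hd2, hw⟩ := hQ w0 hw0 hw0c x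
  have hwxd : w x ≤ d := by
    rw [hwx]
    have := w0.monotone hxd.le
    rwa [hw0c.fix_right (le_refl d)] at this
  have hwxc : c ≤ w x := by
    rw [hwx]
    have := w0.monotone hxc.le
    rwa [hw0c.fix_left (le_refl c)] at this
  refine ⟨f * w⁻¹ * f⁻¹ * w, ?_, ?_, min c1 c2, max d1 d2, lt_min hc1 hc2, max_lt hd1 hd2, ?_⟩
  · exact G.mul_mem (G.mul_mem (G.mul_mem hfG (G.inv_mem hwG)) (G.inv_mem hfG)) hwG
  · have hfw : f (w x) = w x := by
      by_contra h
      have := (hf 1 0 good_id (w x) ⟨by linarith, by linarith⟩ (by rwa [sg_id])).2.2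
      rw [hwx] at this
      linarith
    rw [apply_mul', apply_mul', apply_mul', inv_fix hfw, apply_inv', hfx]
  · intro s τ hg y hy hne
    have hmm : (m : ℝ) / 2 ≤ ((m : ℝ) + 1) / 2 := by linarith
    have hwl : w (sg s τ ((m : ℝ) / 2)) = sg s τ ((m : ℝ) / 2) := by
      by_contra h
      linarith [(hw s τ hg _ ⟨le_refl _, hmm⟩ h).2.1]
    have hwr : w (sg s τ (((m : ℝ) + 1) / 2)) = sg s τ (((m : ℝ) + 1) / 2) := by
      by_contra h
      linarith [(hw s τ hg _ ⟨hmm, le_refl _⟩ h).2.2]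
    refine ⟨⟨?_, ?_⟩, ?_⟩
    · by_contra hnP
      apply hne
      have ff : ∀ z ∈ Set.Icc ((m : ℝ) / 2) (((m : ℝ) + 1) / 2), f (sg s τ z) = sg s τ z := by
        intro z hz
        by_contra h
        exact hnP (hf s τ hg z hz h).1
      obtain ⟨z, hz, hwz⟩ := sg_preserve hg hy w hwl hwr
      rw [apply_mul', apply_mul', apply_mul', hwz, inv_fix (ff z hz), ← hwz, apply_inv', ff y hy]
    · by_contra hnQ
      apply hne
      have ww : ∀ z ∈ Set.Icc ((m : ℝ) / 2) (((m : ℝ) + 1) / 2), w (sg s τ z) = sg s τ z := by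
        intro z hz
        by_contra h
        exact hnQ (hw s τ hg z hz h).1
      have hfl : f (sg s τ ((m : ℝ) / 2)) = sg s τ ((m : ℝ) / 2) := by
        by_contra h
        linarith [(hf s τ hg _ ⟨le_refl _, hmm⟩ h).2.1]
      have hfr : f (sg s τ (((m : ℝ) + 1) / 2)) = sg s τ (((m : ℝ) + 1) / 2) := by
        by_contra h
        linarith [(hf s τ hg _ ⟨hmm, le_refl _⟩ h).2.2]
      obtain ⟨z, hz, hfz⟩ := sg_preserve hg hy f⁻¹ (inv_fix hfl) (inv_fix hfr)
      rw [apply_mul', apply_mul', apply_mul', ww y hy, hfz, inv_fix (ww z hz), ← hfz, inv_apply']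
    · by_contra hout
      apply hne
      have h1 : w (sg s τ y) = sg s τ y := by
        by_contra h
        have := (hw s τ hg y hy h).2
        exact hout ⟨(min_le_right _ _).trans this.1, this.2.trans (le_max_right _ _)⟩
      have h2 : f (sg s τ y) = sg s τ y := by
        by_contra h
        have := (hf s τ hg y hy h).2
        exact hout ⟨(min_le_left _ _).trans this.1, this.2.trans (le_max_left _ _)⟩
      rw [apply_mul', apply_mul', apply_mul', h1, inv_fix h2, inv_fix h1, h2]

theorem loc_push {e : ℤ → ℤ} {G : Subgroup (ℝ ≃o ℝ)}
    (hΘ : ThetaProp e G) (m : ℤ) (P : ℤ → ℤ → Prop) (hPm : ∀ s τ, P s τ → Pm e (m + 1) s τ)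
    (c d : ℝ) (hc : (m : ℝ) / 2 ≤ c) (hd : d ≤ ((m : ℝ) + 1) / 2)
    (k : ℝ ≃o ℝ) (hk : IsDPL k) (hkc : Cs k ((m : ℝ) / 2) (((m : ℝ) + 2) / 2))
    (h1 : ((m : ℝ) + 1) / 2 ≤ k c)
    (hP : Loc G (m + 1) P (k c) (k d)) : Loc G m P c d := by
  intro φ hφ hcs x
  by_cases hx : φ x = x
  · exact ⟨1, G.one_mem, hx.symm, c + 1, d - 1, by linarith, by linarith,
      fun s τ _ y _ h => absurd rfl h⟩
  have hxc : c < x := by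
    by_contra h
    exact hx (hcs.fix_left (not_lt.1 h))
  have hxd : x < d := by
    by_contra h
    exact hx (hcs.fix_right (not_lt.1 h))
  obtain ⟨K, hKG, hK⟩ := hΘ (m + 1) k hk (by
    push_cast
    exact hkc.mono (by linarith) (by linarith))
  push_cast at hK
  have hK' : ∀ s τ : ℤ, Good s τ → Pm e (m + 1) s τ →
      ∀ y, (m : ℝ) / 2 ≤ y → y ≤ ((m : ℝ) + 2) / 2 → K (sg s τ y) = sg s τ (k y) := by
    intro s τ hg hp y hy1 hy2
    exact hK s τ hg hp y ⟨by linarith, by linarith⟩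
  have hKx : ∀ y, (m : ℝ) / 2 ≤ y → y ≤ ((m : ℝ) + 2) / 2 → K y = k y := by
    intro y hy1 hy2
    have := hK' 1 0 good_id (Pm_id e _) y hy1 hy2
    rwa [sg_id, sg_id] at this
  obtain ⟨t', ht'G, ht'x, c1, d1, hc1, hd1, ht'⟩ :=
    hP (k * φ * k⁻¹) ((hk.mul hφ).mul hk.inv) (hcs.conj k) (k x)
  rw [apply_mul', apply_mul', apply_inv'] at ht'x
  have hφx1 : c ≤ φ x := by
    have := φ.monotone hxc.le
    rwa [hcs.fix_left (le_refl c)] at this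
  have hφx2 : φ x ≤ d := by
    have := φ.monotone hxd.le
    rwa [hcs.fix_right (le_refl d)] at this
  refine ⟨K⁻¹ * t' * K, G.mul_mem (G.mul_mem (G.inv_mem hKG) ht'G) hKG, ?_,
    k⁻¹ c1, k⁻¹ d1, ?_, ?_, ?_⟩
  · rw [apply_mul', apply_mul', hKx x (by linarith) (by linarith), ht'x,
      ← hKx (φ x) (by linarith) (by linarith), apply_inv']
  · rw [← k.lt_iff_lt, inv_apply']; exact hc1
  · rw [← k.lt_iff_lt, inv_apply']; exact hd1
  · intro s τ hg y hy hne
    have hne' : t' (K (sg s τ y)) ≠ K (sg s τ y) := by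
      intro h
      apply hne
      rw [apply_mul', apply_mul', h, apply_inv']
    obtain ⟨s', τ', hg', z, hz, hw⟩ := sg_cover (m + 1) (K (sg s τ y))
    rw [hw] at hne'
    obtain ⟨hPs, hz1, hz2⟩ := ht' s' τ' hg' z hz hne'
    push_cast at hz
    have hkz : k (k⁻¹ z) = z := inv_apply' k z
    have hz1' : c < k⁻¹ z := by
      rw [← k.lt_iff_lt, hkz]; linarith
    have hz2' : k⁻¹ z < d := by
      rw [← k.lt_iff_lt, hkz]; linarith
    have hKz := hK' s' τ' hg' (hPm _ _ hPs) (k⁻¹ z) (by linarith) (by linarith)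
    rw [hkz, ← hw] at hKz
    have heq : sg s τ y = sg s' τ' (k⁻¹ z) := (K.injective hKz).symm
    obtain ⟨rfl, rfl, rfl⟩ := sg_unique hg hg' hy ⟨by linarith, by linarith⟩ heq
    exact ⟨hPs, k⁻¹.monotone hz1, k⁻¹.monotone hz2⟩

/-- matching of all labels with indices in `[m, m + N]` -/
def AllP (e : ℤ → ℤ) (m : ℤ) (N : ℕ) (s τ : ℤ) : Prop :=
  ∀ i : ℤ, m ≤ i → i ≤ m + N → Pm e i s τ

theorem Loc.mono {G : Subgroup (ℝ ≃o ℝ)} {m : ℤ} {P Q : ℤ → ℤ → Prop} {c d : ℝ}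
    (h : Loc G m P c d) (hPQ : ∀ s τ, P s τ → Q s τ) : Loc G m Q c d := by
  intro φ hφ hcs x
  obtain ⟨t, htG, htx, c1, d1, hc1, hd1, ht⟩ := h φ hφ hcs x
  exact ⟨t, htG, htx, c1, d1, hc1, hd1, fun s τ hg y hy hne =>
    ⟨hPQ _ _ (ht s τ hg y hy hne).1, (ht s τ hg y hy hne).2⟩⟩

theorem loc_all {e : ℤ → ℤ} (he : ∀ n, e n = 1 ∨ e n = -1) {G : Subgroup (ℝ ≃o ℝ)}
    (hΘ : ThetaProp e G) (N : ℕ) : ∀ (m : ℤ) (c d : ℝ), (m : ℝ) / 2 < c → c < d →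
      d < ((m : ℝ) + 1) / 2 → Loc G m (AllP e m N) c d := by
  induction N with
  | zero =>
    intro m c d hc hcd hd
    refine (loc_base he hΘ m c d hc.le hd.le).mono ?_
    intro s τ h i h1 h2
    have : i = m := by push_cast at h2; omega
    rw [this]; exact h
  | succ N ih =>
    intro m c d hc hcd hd
    obtain ⟨k, hk, hkc, hkx⟩ := exists_push ((m : ℝ) / 2) (((m : ℝ) + 2) / 2) c (((m : ℝ) + 1) / 2)
      hc (by linarith) (by linarith)
    have hkd : k d < ((m : ℝ) + 2) / 2 := by
      have := k.strictMono (show d < ((m : ℝ) + 2) / 2 by linarith)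
      rwa [hkc.fix_right (le_refl _)] at this
    have h1 := ih (m + 1) (k c) (k d) (by push_cast; linarith) (k.strictMono hcd)
      (by push_cast; linarith)
    have h2 := loc_push hΘ m (AllP e (m + 1) N) (fun s τ h => h _ le_rfl (by omega)) c d
      hc.le hd.le k hk hkc hkx.le h1
    refine (loc_comm hc.le hd.le (loc_base he hΘ m c d hc.le hd.le) h2).mono ?_
    rintro s τ ⟨h3, h4⟩ i hi1 hi2
    rcases eq_or_lt_of_le hi1 with rfl | h
    · exact h3
    · exact h4 i (by omega) (by push_cast at hi2; omega)

/-- non-periodicity of the labelling, to the right -/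
def SepProp (e : ℤ → ℤ) : Prop :=
  ∀ m s τ : ℤ, Good s τ → (s = 1 → 0 < τ) → (s = -1 → 2 * m < τ) → ∃ N : ℕ, ¬ AllP e m N s τ

theorem sep_point {e : ℤ → ℤ} (hsep : SepProp e) (m : ℤ) (w : ℝ) (hw : ((m : ℝ) + 1) / 2 < w) :
    ∃ N : ℕ, ∃ s τ : ℤ, Good s τ ∧ ¬ AllP e m N s τ ∧
      ∃ y ∈ Set.Icc ((m : ℝ) / 2) (((m : ℝ) + 1) / 2), w = sg s τ y := by
  obtain ⟨s, τ, hg, y, hy, hwy⟩ := sg_cover m w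
  obtain ⟨N, hN⟩ := hsep m s τ hg (by
    rintro rfl
    unfold sg at hwy
    push_cast at hwy
    have : (0 : ℝ) < τ := by linarith [hy.2]
    exact_mod_cast this) (by
    rintro rfl
    unfold sg at hwy
    push_cast at hwy
    have : (2 : ℝ) * m < τ := by linarith [hy.1]
    exact_mod_cast this)
  exact ⟨N, s, τ, hg, hN, y, hy, hwy⟩

theorem AllP.anti {e : ℤ → ℤ} {m s τ : ℤ} {N N' : ℕ} (h : AllP e m N s τ) (hN : N' ≤ N) :
    AllP e m N' s τ := fun i h1 h2 => h i h1 (by omega)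

theorem move_one {e : ℤ → ℤ} (he : ∀ n, e n = 1 ∨ e n = -1) {G : Subgroup (ℝ ≃o ℝ)}
    (hΘ : ThetaProp e G) (hsep : SepProp e) (i : ℤ) (φ : ℝ ≃o ℝ) (hφ : IsDPL φ)
    (hcs : Cs φ (((i : ℝ) - 1) / 2) (((i : ℝ) + 1) / 2)) (x p q : ℝ)
    (hp : ((i : ℝ) + 1) / 2 < p) (hq : ((i : ℝ) + 1) / 2 < q) :
    ∃ t ∈ G, t x = φ x ∧ t p = p ∧ t q = q := by
  by_cases hx : φ x = x
  · exact ⟨1, G.one_mem, hx.symm, rfl, rfl⟩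
  have hcs' := hcs
  obtain ⟨c1, d1, hc1, hd1, hfix⟩ := hcs
  have hxI : x ∈ Set.Icc c1 d1 := by
    by_contra h
    exact hx (hfix x h)
  have hxl : c1 ≤ x := hxI.1
  have hxr : x ≤ d1 := hxI.2
  -- slightly enlarge the interval
  obtain ⟨c, hcl, hcr⟩ := exists_between hc1
  obtain ⟨d, hdl, hdr⟩ := exists_between hd1
  have hcsd : Cs φ c d := ⟨c1, d1, hcr, hdl, hfix⟩
  obtain ⟨k, hk, hkc, hkx⟩ := exists_push (((i : ℝ) - 1) / 2) (((i : ℝ) + 1) / 2) c ((i : ℝ) / 2)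
    hcl (by linarith) (by linarith)
  obtain ⟨K, hKG, hK⟩ := hΘ i k hk hkc
  have hKx : ∀ y, ((i : ℝ) - 1) / 2 ≤ y → y ≤ ((i : ℝ) + 1) / 2 → K y = k y := by
    intro y hy1 hy2
    have := hK 1 0 good_id (Pm_id e _) y ⟨hy1, hy2⟩
    rwa [sg_id, sg_id] at this
  have hKe : K (((i : ℝ) + 1) / 2) = ((i : ℝ) + 1) / 2 := by
    rw [hKx _ (by linarith) le_rfl, hkc.fix_right le_rfl]
  have hKp : ((i : ℝ) + 1) / 2 < K p := by
    have := K.strictMono hp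
    rwa [hKe] at this
  have hKq : ((i : ℝ) + 1) / 2 < K q := by
    have := K.strictMono hq
    rwa [hKe] at this
  obtain ⟨N1, s1, τ1, hg1, hn1, y1, hy1, hw1⟩ := sep_point hsep i _ hKp
  obtain ⟨N2, s2, τ2, hg2, hn2, y2, hy2, hw2⟩ := sep_point hsep i _ hKq
  have hkd : k d < ((i : ℝ) + 1) / 2 := by
    have := k.strictMono hdr
    rwa [hkc.fix_right (le_refl _)] at this
  obtain ⟨t', ht'G, ht'x, a, b, ha, hb, ht'⟩ := loc_all he hΘ (max N1 N2) i (k c) (k d) hkx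
    (k.strictMono (by linarith)) hkd (k * φ * k⁻¹) ((hk.mul hφ).mul hk.inv) (hcsd.conj k) (k x)
  rw [apply_mul', apply_mul', apply_inv'] at ht'x
  have hφx1 : c ≤ φ x := by
    have := φ.monotone (show c ≤ x by linarith)
    rwa [hcsd.fix_left (le_refl c)] at this
  have hφx2 : φ x ≤ d := by
    have := φ.monotone (show x ≤ d by linarith)
    rwa [hcsd.fix_right (le_refl d)] at this
  have fp : t' (K p) = K p := by
    by_contra h
    rw [hw1] at h
    exact hn1 ((ht' s1 τ1 hg1 y1 hy1 h).1.anti (le_max_left _ _))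
  have fq : t' (K q) = K q := by
    by_contra h
    rw [hw2] at h
    exact hn2 ((ht' s2 τ2 hg2 y2 hy2 h).1.anti (le_max_right _ _))
  refine ⟨K⁻¹ * t' * K, G.mul_mem (G.mul_mem (G.inv_mem hKG) ht'G) hKG, ?_, ?_, ?_⟩
  · rw [apply_mul', apply_mul', hKx x (by linarith) (by linarith), ht'x,
      ← hKx (φ x) (by linarith) (by linarith), apply_inv']
  · rw [apply_mul', apply_mul', fp, apply_inv']
  · rw [apply_mul', apply_mul', fq, apply_inv']

/-! ### Charts and the generators -/

/-- The sign of a letter. -/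
def eps : Letter → ℤ
  | .a => 1
  | .b => 1
  | .A => -1
  | .B => -1

theorem eps_or (l : Letter) : eps l = 1 ∨ eps l = -1 := by
  cases l <;> simp [eps]

theorem eps_inv (l : Letter) : eps l.inv = - eps l := by
  cases l <;> simp [eps, Letter.inv]

/-- The chart of the unit interval centred at `n / 2`. -/
noncomputable def kap (e : ℤ → ℤ) (n : ℤ) (y : ℝ) : ℝ := (e n : ℝ) * y + ((n : ℝ) - e n) / 2

theorem sg_kap {e : ℤ → ℤ} {m s τ : ℤ} (hP : Pm e m s τ) (y : ℝ) :
    sg s τ (kap e m y) = kap e (s * m + τ) y := by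
  unfold Pm at hP
  unfold sg kap
  rw [hP]
  push_cast
  ring

/-- The map `g` acts as `f` in all charts with index of the parity of `m`. -/
def Acts (e : ℤ → ℤ) (f : ℝ ≃o ℝ) (m : ℤ) (g : ℝ ≃o ℝ) : Prop :=
  ∀ n : ℤ, Even (n - m) → ∀ y ∈ Set.Icc (0 : ℝ) 1, g (kap e n y) = kap e n (f y)

theorem InH.zero {f : ℝ ≃o ℝ} (hf : InH f) : f 0 = 0 := by
  obtain ⟨-, k, ε, hε, h0, h1⟩ := hf
  rw [h0 0 ⟨le_rfl, hε.le⟩, mul_zero]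

theorem InH.one' {f : ℝ ≃o ℝ} (hf : InH f) : f 1 = 1 := by
  obtain ⟨-, k, ε, hε, h0, h1⟩ := hf
  rw [h1 1 ⟨by linarith, le_rfl⟩]
  ring

theorem InH.maps {f : ℝ ≃o ℝ} (hf : InH f) {y : ℝ} (hy : y ∈ Set.Icc (0 : ℝ) 1) :
    f y ∈ Set.Icc (0 : ℝ) 1 := by
  refine ⟨?_, ?_⟩
  · have := f.monotone hy.1
    rwa [hf.zero] at this
  · have := f.monotone hy.2
    rwa [hf.one'] at this

theorem acts_zeta {ρ : ℤ → Letter} (hL : IsLabelling ρ) {ν ζ : ℝ ≃o ℝ} (h : IsZeta ρ ν ζ) :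
    Acts (fun n => eps (ρ n)) ν 1 ζ := by
  intro n hn y hy
  obtain ⟨k, hk⟩ := hn
  have hn : n = 2 * k + 1 := by omega
  subst hn
  obtain ⟨y0, y1⟩ := hy
  rcases (hL (2 * k + 1)).2 ⟨k, rfl⟩ with hl | hl
  · simp only [kap, hl, eps]
    have := (h k (y + k) ⟨by linarith, by linarith⟩).1 hl
    rw [add_sub_cancel_right] at this
    convert this using 1 <;> push_cast <;> ring_nf
  · simp only [kap, hl, eps]
    have := (h k (k + 1 - y) ⟨by linarith, by linarith⟩).2 hl
    rw [sub_sub_cancel] at this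
    convert this using 1 <;> push_cast <;> ring_nf

theorem acts_chi {ρ : ℤ → Letter} (hL : IsLabelling ρ) {ν χ : ℝ ≃o ℝ} (h : IsChi ρ ν χ) :
    Acts (fun n => eps (ρ n)) ν 0 χ := by
  intro n hn y hy
  obtain ⟨k, hk⟩ := hn
  have hn : n = 2 * k := by omega
  subst hn
  obtain ⟨y0, y1⟩ := hy
  rcases (hL (2 * k)).1 ⟨k, by ring⟩ with hl | hl
  · simp only [kap, hl, eps]
    have := (h k (y + (k - 1 / 2)) ⟨by linarith, by linarith⟩).1 hl
    rw [add_sub_cancel_right] at this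
    convert this using 1 <;> push_cast <;> ring_nf
  · simp only [kap, hl, eps]
    have := (h k (k + 1 / 2 - y) ⟨by linarith, by linarith⟩).2 hl
    rw [sub_sub_cancel] at this
    convert this using 1 <;> push_cast <;> ring_nf

theorem exists_acts {e : ℤ → ℤ} {G H : Subgroup (ℝ ≃o ℝ)} (hH : ∀ f : ℝ ≃o ℝ, f ∈ H ↔ InH f)
    {S : Set (ℝ ≃o ℝ)} (hS : Subgroup.closure S = H)
    (m : ℤ) (hgen : ∀ f ∈ S, ∃ g ∈ G, Acts e f m g) :
    ∀ f ∈ H, ∃ g ∈ G, Acts e f m g := by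
  intro f hf
  rw [← hS] at hf
  induction hf using Subgroup.closure_induction with
  | mem x hx => exact hgen x hx
  | one => exact ⟨1, G.one_mem, fun n _ y _ => rfl⟩
  | mul x y hx hy ihx ihy =>
    obtain ⟨gx, hgx, ax⟩ := ihx
    obtain ⟨gy, hgy, ay⟩ := ihy
    rw [hS] at hx hy
    refine ⟨gx * gy, G.mul_mem hgx hgy, fun n hn t ht => ?_⟩
    rw [apply_mul', ay n hn t ht, ax n hn _ (((hH _).1 hy).maps ht), apply_mul']
  | inv x hx ihx =>
    obtain ⟨gx, hgx, ax⟩ := ihx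
    rw [hS] at hx
    refine ⟨gx⁻¹, G.inv_mem hgx, fun n hn t ht => ?_⟩
    rw [inv_eq_iff', ax n hn _ (((hH _).1 (H.inv_mem hx)).maps ht), inv_apply']

theorem Acts.parity {e : ℤ → ℤ} {f g : ℝ ≃o ℝ} {m m' : ℤ} (h : Acts e f m g)
    (hm : Even (m' - m)) : Acts e f m' g := by
  intro n hn
  refine h n ?_
  have := hn.add hm
  simpa using this

/-- Conjugation into a chart. -/
theorem chart_conj {e : ℤ → ℤ} (he : ∀ n, e n = 1 ∨ e n = -1) (n : ℤ) (φ : ℝ ≃o ℝ)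
    (hφ : IsDPL φ) (hc : Cs φ 0 1) :
    ∃ ψ : ℝ ≃o ℝ, IsDPL ψ ∧ Cs ψ (((n : ℝ) - 1) / 2) (((n : ℝ) + 1) / 2) ∧
      ∀ y, ψ (kap e n y) = kap e n (φ y) := by
  obtain ⟨c1, d1, h1, h2, h3⟩ := hc
  rcases he n with h | h
  · have hs : (2 : ℝ) ^ (0 : ℤ) ≠ 0 := by norm_num
    refine ⟨cj (2 ^ (0 : ℤ)) (((1 - n : ℤ) : ℝ) / 2) hs φ, hφ.cj_pos 0 _ (isDyadic_half _) hs,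
      ⟨c1 + ((n : ℝ) - 1) / 2, d1 + ((n : ℝ) - 1) / 2, by linarith, by linarith, ?_⟩, ?_⟩
    · intro x hx
      rw [cj_apply, h3]
      · simp
      · intro hx'
        apply hx
        obtain ⟨h4, h5⟩ := hx'
        push_cast at h4 h5
        simp only [zpow_zero, one_mul] at h4 h5
        constructor <;> linarith
    · intro y
      rw [cj_apply]
      have : (2 : ℝ) ^ (0 : ℤ) * kap e n y + ((1 - n : ℤ) : ℝ) / 2 = y := by
        simp only [kap, h]; push_cast; ring
      rw [this]
      simp only [kap, h]; push_cast; ring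
  · have hs : (-1 : ℝ) ≠ 0 := by norm_num
    refine ⟨cj (-1) (((1 + n : ℤ) : ℝ) / 2) hs φ, hφ.cj_neg _ (isDyadic_half _) hs,
      ⟨((n : ℝ) + 1) / 2 - d1, ((n : ℝ) + 1) / 2 - c1, by linarith, by linarith, ?_⟩, ?_⟩
    · intro x hx
      rw [cj_apply, h3]
      · simp
      · intro hx'
        apply hx
        obtain ⟨h4, h5⟩ := hx'
        push_cast at h4 h5
        constructor <;> linarith
    · intro y
      rw [cj_apply]
      have : (-1 : ℝ) * kap e n y + ((1 + n : ℤ) : ℝ) / 2 = y := by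
        simp only [kap, h]; push_cast; ring
      rw [this]
      simp only [kap, h]; push_cast; ring

/-- Conjugation out of a chart. -/
theorem chart_conj' {e : ℤ → ℤ} (he : ∀ n, e n = 1 ∨ e n = -1) (n : ℤ) (φ : ℝ ≃o ℝ)
    (hφ : IsDPL φ) (hc : Cs φ (((n : ℝ) - 1) / 2) (((n : ℝ) + 1) / 2)) :
    ∃ ψ : ℝ ≃o ℝ, IsDPL ψ ∧ Cs ψ 0 1 ∧ ∀ y, φ (kap e n y) = kap e n (ψ y) := by
  obtain ⟨c1, d1, h1, h2, h3⟩ := hc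
  rcases he n with h | h
  · have hs : (2 : ℝ) ^ (0 : ℤ) ≠ 0 := by norm_num
    refine ⟨cj (2 ^ (0 : ℤ)) (((n - 1 : ℤ) : ℝ) / 2) hs φ, hφ.cj_pos 0 _ (isDyadic_half _) hs,
      ⟨c1 - ((n : ℝ) - 1) / 2, d1 - ((n : ℝ) - 1) / 2, by linarith, by linarith, ?_⟩, ?_⟩
    · intro x hx
      rw [cj_apply, h3]
      · simp
      · intro hx'
        apply hx
        obtain ⟨h4, h5⟩ := hx'
        push_cast at h4 h5
        simp only [zpow_zero, one_mul] at h4 h5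
        constructor <;> linarith
    · intro y
      rw [cj_apply]
      have : (2 : ℝ) ^ (0 : ℤ) * y + ((n - 1 : ℤ) : ℝ) / 2 = kap e n y := by
        simp only [kap, h]; push_cast; ring
      rw [this]
      simp only [kap, h]; push_cast; ring
  · have hs : (-1 : ℝ) ≠ 0 := by norm_num
    refine ⟨cj (-1) (((1 + n : ℤ) : ℝ) / 2) hs φ, hφ.cj_neg _ (isDyadic_half _) hs,
      ⟨((n : ℝ) + 1) / 2 - d1, ((n : ℝ) + 1) / 2 - c1, by linarith, by linarith, ?_⟩, ?_⟩
    · intro x hx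
      rw [cj_apply, h3]
      · simp
      · intro hx'
        apply hx
        obtain ⟨h4, h5⟩ := hx'
        push_cast at h4 h5
        constructor <;> linarith
    · intro y
      rw [cj_apply]
      have : (-1 : ℝ) * y + ((1 + n : ℤ) : ℝ) / 2 = kap e n y := by
        simp only [kap, h]; push_cast; ring
      rw [this]
      simp only [kap, h]; push_cast; ring

theorem kap_surj {e : ℤ → ℤ} (he : ∀ n, e n = 1 ∨ e n = -1) (n : ℤ) {x : ℝ}
    (hx : x ∈ Set.Icc (((n : ℝ) - 1) / 2) (((n : ℝ) + 1) / 2)) :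
    ∃ y ∈ Set.Icc (0 : ℝ) 1, x = kap e n y := by
  obtain ⟨h1, h2⟩ := hx
  rcases he n with h | h
  · refine ⟨x - ((n : ℝ) - 1) / 2, ⟨by linarith, by linarith⟩, ?_⟩
    simp only [kap, h]; push_cast; ring
  · refine ⟨((n : ℝ) + 1) / 2 - x, ⟨by linarith, by linarith⟩, ?_⟩
    simp only [kap, h]; push_cast; ring

theorem kap_mem {e : ℤ → ℤ} (he : ∀ n, e n = 1 ∨ e n = -1) (n : ℤ) {y : ℝ}
    (hy : y ∈ Set.Icc (0 : ℝ) 1) :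
    kap e n y ∈ Set.Icc (((n : ℝ) - 1) / 2) (((n : ℝ) + 1) / 2) := by
  obtain ⟨h1, h2⟩ := hy
  rcases he n with h | h
  · simp only [kap, h]; push_cast; constructor <;> linarith
  · simp only [kap, h]; push_cast; constructor <;> linarith

theorem thetaProp {e : ℤ → ℤ} (he : ∀ n, e n = 1 ∨ e n = -1) {G H : Subgroup (ℝ ≃o ℝ)}
    (hH : ∀ f : ℝ ≃o ℝ, f ∈ H ↔ InH f) (hact : ∀ m : ℤ, ∀ f ∈ H, ∃ g ∈ G, Acts e f m g) :
    ThetaProp e G := by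
  intro m φ hφ hcs
  obtain ⟨ψ, hψ, hc, hk⟩ := chart_conj' he m φ hφ hcs
  obtain ⟨Θ, hΘ, hA⟩ := hact m ψ ((hH _).2 (hψ.inH hc))
  refine ⟨Θ, hΘ, fun s τ hg hP x hx => ?_⟩
  obtain ⟨y, hy, rfl⟩ := kap_surj he m hx
  rw [hk, sg_kap hP, sg_kap hP]
  refine hA _ ?_ y hy
  obtain ⟨k, rfl⟩ := hg.2
  rcases hg.1 with rfl | rfl
  · exact ⟨k, by ring⟩
  · exact ⟨k - m, by ring⟩

/-- Every point lies in a chart whose index has the given parity. -/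
theorem exists_chart (m : ℤ) (x : ℝ) : ∃ n : ℤ, Even (n - m) ∧
    x ∈ Set.Icc (((n : ℝ) - 1) / 2) (((n : ℝ) + 1) / 2) := by
  have h1 := Int.floor_le (x - ((m : ℝ) - 1) / 2)
  have h2 := Int.lt_floor_add_one (x - ((m : ℝ) - 1) / 2)
  set k : ℤ := ⌊x - ((m : ℝ) - 1) / 2⌋
  refine ⟨m + 2 * k, ⟨k, by ring⟩, ?_, ?_⟩
  · push_cast; linarith
  · push_cast; linarith

/-! ### Combinatorics of quasi-periodic labellings -/

theorem blockWord_getElem? (ρ : ℤ → Letter) (k : ℤ) (n i : ℕ) (hi : i ≤ n) :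
    (blockWord ρ k n)[i]? = some (ρ (k + i)) := by
  have h : blockWord ρ k n = (List.range (n + 1)).map fun i : ℕ => ρ (k + (i : ℤ)) := by
    unfold blockWord
    simp only [List.bind_eq_flatMap, List.map_flatMap, List.pure_def, List.map_cons, List.map_nil]
    exact List.flatMap_pure_eq_map _ _
  rw [h, List.getElem?_map, List.getElem?_range (by omega)]
  rfl

theorem blockWord_length (ρ : ℤ → Letter) (k : ℤ) (n : ℕ) :
    (blockWord ρ k n).length = n + 1 := by
  simp [blockWord]

theorem block_infix {ρ : ℤ → Letter} {k k' : ℤ} {n n' : ℕ}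
    (h : (blockWord ρ k n) <:+: (blockWord ρ k' n')) :
    ∃ j : ℤ, k' ≤ j ∧ ∀ i : ℕ, i ≤ n → ρ (j + i) = ρ (k + i) := by
  obtain ⟨s, t, hst⟩ := h
  refine ⟨k' + s.length, by omega, fun i hi => ?_⟩
  have hlen := congrArg List.length hst
  simp only [List.length_append, blockWord_length] at hlen
  have h1 := blockWord_getElem? ρ k' n' (s.length + i) (by omega)
  rw [← hst, List.append_assoc, List.getElem?_append_right (by omega),
    List.getElem?_append_left (by rw [blockWord_length]; omega)] at h1
  rw [Nat.add_sub_cancel_left, blockWord_getElem? ρ k n i hi] at h1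
  have h2 := Option.some.inj h1
  rw [h2]
  push_cast
  ring_nf

theorem block_inv {ρ : ℤ → Letter} {k k' : ℤ} {n : ℕ}
    (h : blockWord ρ k' n = wordInv (blockWord ρ k n)) (i : ℕ) (hi : i ≤ n) :
    ρ (k' + i) = (ρ (k + (n - i : ℕ))).inv := by
  have h1 := blockWord_getElem? ρ k' n i hi
  rw [h, wordInv, List.getElem?_reverse (by simp [blockWord_length]; omega), List.getElem?_map,
    List.length_map, blockWord_length, show n + 1 - 1 - i = n - i by omega,
    blockWord_getElem? ρ k n (n - i) (by omega)] at h1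
  exact (Option.some.inj h1).symm

theorem label_even {ρ : ℤ → Letter} (hL : IsLabelling ρ) {i j : ℤ}
    (h : ρ i = ρ j ∨ ρ i = (ρ j).inv) : Even (i - j) := by
  rcases Int.even_or_odd i with hi | hi <;> rcases Int.even_or_odd j with hj | hj
  · exact hi.sub hj
  · exfalso
    rcases (hL i).1 hi with h1 | h1 <;> rcases (hL j).2 hj with h2 | h2 <;>
      simp [h1, h2, Letter.inv] at h
  · exfalso
    rcases (hL i).2 hi with h1 | h1 <;> rcases (hL j).1 hj with h2 | h2 <;>
      simp [h1, h2, Letter.inv] at h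
  · exact hi.sub_odd hj

theorem qp_one {ρ : ℤ → Letter} (hρ : IsQuasiPeriodic ρ) (k : ℤ) (n : ℕ) (M : ℤ) :
    ∃ j : ℤ, M ≤ j ∧ Even (j - k) ∧ ∀ i : ℕ, i ≤ n → eps (ρ (j + i)) = eps (ρ (k + i)) := by
  obtain ⟨hL, h1, -⟩ := hρ
  obtain ⟨N, hN⟩ := h1 k n
  obtain ⟨j, hj, hw⟩ := block_infix (hN M N (by omega))
  refine ⟨j, hj, ?_, fun i hi => by rw [hw i hi]⟩
  have := hw 0 (Nat.zero_le _)
  simp only [Nat.cast_zero, add_zero] at this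
  exact label_even hL (Or.inl this)

theorem qp_reflect {ρ : ℤ → Letter} (hρ : IsQuasiPeriodic ρ) (k : ℤ) (n : ℕ) (M : ℤ) :
    ∃ τ : ℤ, M ≤ τ ∧ Even τ ∧ ∀ i : ℤ, k ≤ i → i ≤ k + n →
      eps (ρ (-1 * i + τ)) = -1 * eps (ρ i) := by
  obtain ⟨k', hk'⟩ := hρ.2.2 k n
  obtain ⟨j, hj, hev, hw⟩ := qp_one hρ k' n (M - k - n)
  have hinv := block_inv hk'
  refine ⟨j + k + n, by omega, ?_, ?_⟩
  · have h0 := hinv 0 (Nat.zero_le _)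
    have h1 := label_even hρ.1 (Or.inr h0)
    simp only [Nat.cast_zero, add_zero, Nat.sub_zero] at h1
    obtain ⟨u, hu⟩ := h1
    obtain ⟨v, hv⟩ := hev
    exact ⟨u + v + k + n, by omega⟩
  · intro i hi1 hi2
    obtain ⟨i', rfl⟩ : ∃ i' : ℕ, i = k + i' := ⟨(i - k).toNat, by omega⟩
    have hi' : i' ≤ n := by omega
    have h1 := hw (n - i') (by omega)
    have h2 := hinv (n - i') (by omega)
    rw [Nat.sub_sub_self hi'] at h2
    rw [h2, eps_inv] at h1
    rw [show -1 * (k + (i' : ℤ)) + (j + k + n) = j + ((n - i' : ℕ) : ℤ) by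
      push_cast [Nat.cast_sub hi']; ring, h1]
    ring

theorem sepProp {ρ : ℤ → Letter} (hρ : IsQuasiPeriodic ρ) : SepProp (fun n => eps (ρ n)) := by
  intro m s τ hg h1 h2
  rcases hg.1 with rfl | rfl
  · by_contra hcon
    push Not at hcon
    have hτ := h1 rfl
    have hper1 : ∀ i : ℤ, m ≤ i → eps (ρ (i + τ)) = eps (ρ i) := by
      intro i hi
      have := hcon (i - m).toNat i hi (by omega)
      simpa [Pm] using this
    obtain ⟨d, rfl⟩ : ∃ d : ℕ, τ = d := ⟨τ.toNat, by omega⟩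
    have hper : Function.Periodic (fun n : ℤ => eps (ρ n)) (d : ℤ) := by
      intro k
      obtain ⟨j, hj, -, hw⟩ := qp_one hρ k d m
      have e0 := hw 0 (Nat.zero_le _)
      have e1 := hw d le_rfl
      simp only [Nat.cast_zero, add_zero] at e0
      have e2 := hper1 j hj
      show eps (ρ (k + d)) = eps (ρ k)
      rw [← e1, e2, e0]
    obtain ⟨c, -, ⟨r, rfl⟩, hc⟩ := qp_reflect hρ 0 d 0
    have hm1 := Int.emod_nonneg r hτ.ne'
    have hm2 := Int.emod_lt_of_pos r hτ
    have hm3 := Int.emod_add_mul_ediv r d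
    have := hc (r % d) hm1 (by omega)
    have p1 := (hper.int_mul (r / d)) (r % d)
    have p2 := (hper.int_mul (r / d)) r
    simp only [Int.cast_id] at p1 p2
    rw [show r % d + r / d * d = r by linarith] at p1
    rw [show -1 * (r % (d : ℤ)) + (r + r) = r + r / d * d by linarith, p2, ← p1] at this
    rcases eps_or (ρ r) with h | h <;> rw [h] at this <;> omega
  · have hτ := h2 rfl
    obtain ⟨r, rfl⟩ := hg.2
    refine ⟨(r - m).toNat, fun h => ?_⟩
    have := h r (by omega) (by omega)
    simp only [Pm] at this
    rw [show -1 * r + (r + r) = r by ring] at this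
    rcases eps_or (ρ r) with h | h <;> rw [h] at this <;> omega

/-! ### Dynamics of the elements of the group -/

theorem equivariance {e : ℤ → ℤ} (he : ∀ n, e n = 1 ∨ e n = -1) {S : Set (ℝ ≃o ℝ)}
    (hS : ∀ g ∈ S, ∃ (f : ℝ ≃o ℝ) (m : ℤ), InH f ∧ Acts e f m g) :
    ∀ a ∈ Subgroup.closure S, ∃ R : ℕ, (∀ x : ℝ, |2 * a x - 2 * x| ≤ R) ∧
      ∀ (x : ℝ) (s τ : ℤ), Good s τ → (∀ i : ℤ, |(i : ℝ) - 2 * x| ≤ R → Pm e i s τ) →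
        a (sg s τ x) = sg s τ (a x) := by
  intro a ha
  induction ha using Subgroup.closure_induction with
  | mem g hg =>
    obtain ⟨f, m, hf, hA⟩ := hS g hg
    refine ⟨2, fun x => ?_, fun x s τ hG hP => ?_⟩
    · obtain ⟨n, hn, hx⟩ := exists_chart m x
      obtain ⟨y, hy, rfl⟩ := kap_surj he n hx
      rw [hA n hn y hy]
      have h1 := kap_mem he n (hf.maps hy)
      rw [abs_le]
      push_cast
      constructor <;> linarith [h1.1, h1.2, hx.1, hx.2]
    · obtain ⟨n, hn, hx⟩ := exists_chart m x
      obtain ⟨y, hy, rfl⟩ := kap_surj he n hx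
      have hPn := hP n (by rw [abs_le]; push_cast; constructor <;> linarith [hx.1, hx.2])
      rw [sg_kap hPn, hA n hn y hy, sg_kap hPn]
      refine hA _ ?_ y hy
      obtain ⟨k, rfl⟩ := hG.2
      obtain ⟨l, hl⟩ := hn
      rcases hG.1 with rfl | rfl
      · exact ⟨k + l, by omega⟩
      · exact ⟨k - l - m, by omega⟩
  | one => exact ⟨0, fun x => by simp, fun x s τ _ _ => rfl⟩
  | mul a b _ _ iha ihb =>
    obtain ⟨Ra, ha1, ha2⟩ := iha
    obtain ⟨Rb, hb1, hb2⟩ := ihb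
    refine ⟨Ra + Rb, fun x => ?_, fun x s τ hG hP => ?_⟩
    · have h1 := abs_le.1 (ha1 (b x))
      have h2 := abs_le.1 (hb1 x)
      rw [apply_mul', abs_le]
      push_cast
      constructor <;> linarith [h1.1, h1.2, h2.1, h2.2]
    · have h2 := abs_le.1 (hb1 x)
      have hRa : (0 : ℝ) ≤ Ra := Nat.cast_nonneg _
      rw [apply_mul', apply_mul', hb2 x s τ hG, ha2 _ s τ hG]
      · intro i hi
        apply hP
        rw [abs_le] at hi ⊢
        push_cast
        constructor <;> linarith [hi.1, hi.2, h2.1, h2.2]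
      · intro i hi
        apply hP
        push_cast
        linarith
  | inv a _ iha =>
    obtain ⟨R, h1, h2⟩ := iha
    have hR : (0 : ℝ) ≤ R := Nat.cast_nonneg _
    refine ⟨2 * R, fun x => ?_, fun x s τ hG hP => ?_⟩
    · have h3 := h1 (a⁻¹ x)
      rw [inv_apply', abs_sub_comm] at h3
      push_cast
      linarith
    · have h3 := h1 (a⁻¹ x)
      rw [inv_apply', abs_le] at h3
      rw [inv_eq_iff', h2 _ s τ hG, inv_apply']
      intro i hi
      apply hP
      rw [abs_le] at hi ⊢
      push_cast
      constructor <;> linarith [hi.1, hi.2, h3.1, h3.2]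

theorem exists_fixed {ρ : ℤ → Letter} (hρ : IsQuasiPeriodic ρ) {S : Set (ℝ ≃o ℝ)}
    (hS : ∀ g ∈ S, ∃ (f : ℝ ≃o ℝ) (m : ℤ), InH f ∧ Acts (fun n => eps (ρ n)) f m g)
    (a : ℝ ≃o ℝ) (ha : a ∈ Subgroup.closure S) (M : ℝ) : ∃ p : ℝ, M < p ∧ a p = p := by
  obtain ⟨R, -, hR⟩ := equivariance (fun n => eps_or (ρ n)) hS a ha
  obtain ⟨K, hK⟩ : ∃ K : ℤ, M < K := ⟨⌊M⌋ + 1, by push_cast; exact Int.lt_floor_add_one M⟩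
  obtain ⟨τ, hτ, hev, hP⟩ := qp_reflect hρ (2 * K - R) (2 * R) (4 * K + 2)
  have hτ' : (4 * (K : ℝ) + 2) ≤ τ := by exact_mod_cast hτ
  have key := hR K (-1) τ ⟨Or.inr rfl, hev⟩ (by
    intro i hi
    rw [abs_le] at hi
    have h1 : (2 * K - R : ℤ) ≤ i := by
      have : ((2 * K - R : ℤ) : ℝ) ≤ i := by push_cast; linarith [hi.1]
      exact_mod_cast this
    have h2 : i ≤ (2 * K + R : ℤ) := by
      have : (i : ℝ) ≤ ((2 * K + R : ℤ) : ℝ) := by push_cast; linarith [hi.2]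
      exact_mod_cast this
    exact hP i h1 (by push_cast; omega))
  have hσ : M < sg (-1) τ K := by
    simp only [sg]; push_cast; linarith
  have hcont : ContinuousOn (fun x => a x) (Set.Ioi M) := a.continuous.continuousOn
  have hid : ContinuousOn (fun x : ℝ => x) (Set.Ioi M) := continuousOn_id
  simp only [sg] at key hσ
  push_cast at key hσ
  rcases le_total (a K) K with h | h
  · obtain ⟨x, hx, hx'⟩ := isPreconnected_Ioi.intermediate_value₂ (Set.mem_Ioi.2 hK)
      (Set.mem_Ioi.2 hσ) hcont hid h (by rw [key]; linarith)
    exact ⟨x, hx, hx'⟩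
  · obtain ⟨x, hx, hx'⟩ := isPreconnected_Ioi.intermediate_value₂ (Set.mem_Ioi.2 hσ)
      (Set.mem_Ioi.2 hK) hcont hid (by rw [key]; linarith) h
    exact ⟨x, hx, hx'⟩

theorem chain {e : ℤ → ℤ} (he : ∀ n, e n = 1 ∨ e n = -1) {G : Subgroup (ℝ ≃o ℝ)}
    (hΘ : ThetaProp e G) (hsep : SepProp e) {S : Set (ℝ ≃o ℝ)}
    (hS : ∀ g ∈ S, ∃ (f : ℝ ≃o ℝ) (m : ℤ), InH f ∧ Acts e f m g) :
    ∀ a ∈ Subgroup.closure S, ∃ D : ℝ, (∀ x, |a x - x| ≤ D) ∧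
      ∀ x p q : ℝ, x + D < p → x + D < q → ∃ t ∈ G, t x = a x ∧ t p = p ∧ t q = q := by
  intro a ha
  induction ha using Subgroup.closure_induction with
  | mem g hg =>
    obtain ⟨f, m, hf, hA⟩ := hS g hg
    refine ⟨1, fun x => ?_, fun x p q hp hq => ?_⟩
    · obtain ⟨n, hn, hx⟩ := exists_chart m x
      obtain ⟨y, hy, rfl⟩ := kap_surj he n hx
      rw [hA n hn y hy]
      have h1 := kap_mem he n (hf.maps hy)
      rw [abs_le]
      constructor <;> linarith [h1.1, h1.2, hx.1, hx.2]
    · obtain ⟨n, hn, hx⟩ := exists_chart m x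
      obtain ⟨y, hy, rfl⟩ := kap_surj he n hx
      rw [hA n hn y hy]
      rcases eq_or_lt_of_le hy.1 with h0 | h0
      · refine ⟨1, G.one_mem, ?_, rfl, rfl⟩
        rw [← h0, hf.zero]; rfl
      rcases eq_or_lt_of_le hy.2 with h1 | h1
      · refine ⟨1, G.one_mem, ?_, rfl, rfl⟩
        rw [h1, hf.one']; rfl
      obtain ⟨φ, hφ, hc, hφy⟩ := hf.exists_compact y h0 h1
      obtain ⟨ψ, hψ, hψc, hψk⟩ := chart_conj he n φ hφ hc
      obtain ⟨t, ht, htx, htp, htq⟩ := move_one he hΘ hsep n ψ hψ hψc (kap e n y) p q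
        (by linarith [hx.1]) (by linarith [hx.1])
      exact ⟨t, ht, by rw [htx, hψk, hφy], htp, htq⟩
  | one => exact ⟨0, fun x => by simp, fun x p q _ _ => ⟨1, G.one_mem, rfl, rfl, rfl⟩⟩
  | mul a b _ _ iha ihb =>
    obtain ⟨Da, ha1, ha2⟩ := iha
    obtain ⟨Db, hb1, hb2⟩ := ihb
    refine ⟨Da + Db, fun x => ?_, fun x p q hp hq => ?_⟩
    · have h1 := abs_le.1 (ha1 (b x))
      have h2 := abs_le.1 (hb1 x)
      rw [apply_mul', abs_le]
      constructor <;> linarith [h1.1, h1.2, h2.1, h2.2]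
    · have h0 : 0 ≤ Da := (abs_nonneg _).trans (ha1 0)
      have h2 := abs_le.1 (hb1 x)
      obtain ⟨t, ht, htx, htp, htq⟩ := hb2 x p q (by linarith) (by linarith)
      obtain ⟨u, hu, hux, hup, huq⟩ := ha2 (b x) p q (by linarith [h2.2]) (by linarith [h2.2])
      refine ⟨u * t, G.mul_mem hu ht, ?_, ?_, ?_⟩
      · rw [apply_mul', htx, hux, apply_mul']
      · rw [apply_mul', htp, hup]
      · rw [apply_mul', htq, huq]
  | inv a _ iha =>
    obtain ⟨D, h1, h2⟩ := iha
    have h0 : 0 ≤ D := (abs_nonneg _).trans (h1 0)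
    refine ⟨2 * D, fun x => ?_, fun x p q hp hq => ?_⟩
    · have h3 := h1 (a⁻¹ x)
      rw [inv_apply', abs_sub_comm] at h3
      linarith
    · have h3 := h1 (a⁻¹ x)
      rw [inv_apply', abs_le] at h3
      obtain ⟨t, ht, htx, htp, htq⟩ := h2 (a⁻¹ x) p q (by linarith [h3.1]) (by linarith [h3.1])
      refine ⟨t⁻¹, G.inv_mem ht, ?_, inv_fix htp, inv_fix htq⟩
      rw [inv_eq_iff', htx, inv_apply']

theorem closure_fix {S : Set (ℝ ≃o ℝ)} {x : ℝ} (h : ∀ g ∈ S, g x = x) :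
    ∀ γ ∈ Subgroup.closure S, γ x = x := by
  intro γ hγ
  induction hγ using Subgroup.closure_induction with
  | mem g hg => exact h g hg
  | one => rfl
  | mul a b _ _ iha ihb => rw [apply_mul', ihb, iha]
  | inv a _ iha => exact inv_fix iha

/-- The key structural proposition: given `a₁, a₂, a₃ ∈ G_ρ`, there
exist `h, g₁, g₂, g₃ ∈ G_ρ` and nonempty sets `I₁ ⊆ I₂ ⊆ I₃ ⊆ ℝ` such that, writing
`fᵢ := h⁻¹ aᵢ h`: each of `⟨g₁, g₂, g₃⟩`, `⟨f₁, g₁⟩`, `⟨f₂, g₂⟩`, `⟨f₃, g₃⟩` has a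
global fixed point, `fᵢ gᵢ` fixes `Iᵢ` pointwise, and `Supp(gᵢ) ⊆ I_{i+1}` for
`i = 1, 2`. -/
theorem key_proposition
    (ρ : ℤ → Letter) (hρ : IsQuasiPeriodic ρ)
    (H : Subgroup (ℝ ≃o ℝ)) (hH : ∀ f : ℝ ≃o ℝ, f ∈ H ↔ InH f)
    (ν₁ ν₂ ν₃ : ℝ ≃o ℝ) (hgen : Subgroup.closure {ν₁, ν₂, ν₃} = H)
    (ζ₁ ζ₂ ζ₃ χ₁ χ₂ χ₃ : ℝ ≃o ℝ)
    (hζ₁ : IsZeta ρ ν₁ ζ₁) (hζ₂ : IsZeta ρ ν₂ ζ₂) (hζ₃ : IsZeta ρ ν₃ ζ₃)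
    (hχ₁ : IsChi ρ ν₁ χ₁) (hχ₂ : IsChi ρ ν₂ χ₂) (hχ₃ : IsChi ρ ν₃ χ₃)
    (G : Subgroup (ℝ ≃o ℝ))
    (hG : G = Subgroup.closure {ζ₁, ζ₂, ζ₃, χ₁, χ₂, χ₃})
    (a₁ a₂ a₃ : ℝ ≃o ℝ) (ha₁ : a₁ ∈ G) (ha₂ : a₂ ∈ G) (ha₃ : a₃ ∈ G) :
    ∃ h g₁ g₂ g₃ : ℝ ≃o ℝ, h ∈ G ∧ g₁ ∈ G ∧ g₂ ∈ G ∧ g₃ ∈ G ∧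
      ∃ I₁ I₂ I₃ : Set ℝ, I₁.Nonempty ∧ I₂.Nonempty ∧ I₃.Nonempty ∧
        I₁ ⊆ I₂ ∧ I₂ ⊆ I₃ ∧
        (∃ x : ℝ, ∀ γ ∈ Subgroup.closure {g₁, g₂, g₃}, γ x = x) ∧
        (∃ x : ℝ, ∀ γ ∈ Subgroup.closure {h⁻¹ * a₁ * h, g₁}, γ x = x) ∧
        (∃ x : ℝ, ∀ γ ∈ Subgroup.closure {h⁻¹ * a₂ * h, g₂}, γ x = x) ∧
        (∃ x : ℝ, ∀ γ ∈ Subgroup.closure {h⁻¹ * a₃ * h, g₃}, γ x = x) ∧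
        (∀ x ∈ I₁, (h⁻¹ * a₁ * h * g₁) x = x) ∧
        (∀ x ∈ I₂, (h⁻¹ * a₂ * h * g₂) x = x) ∧
        (∀ x ∈ I₃, (h⁻¹ * a₃ * h * g₃) x = x) ∧
        {x : ℝ | g₁ x ≠ x} ⊆ I₂ ∧
        {x : ℝ | g₂ x ≠ x} ⊆ I₃ := by
  subst hG
  set e : ℤ → ℤ := fun n => eps (ρ n) with he_def
  set S : Set (ℝ ≃o ℝ) := {ζ₁, ζ₂, ζ₃, χ₁, χ₂, χ₃} with hS_def
  have he : ∀ n, e n = 1 ∨ e n = -1 := fun n => eps_or (ρ n)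
  have hν : ∀ ν ∈ ({ν₁, ν₂, ν₃} : Set (ℝ ≃o ℝ)), InH ν := fun ν h =>
    (hH ν).1 (hgen ▸ Subgroup.subset_closure h)
  have hν₁ := hν ν₁ (by simp)
  have hν₂ := hν ν₂ (by simp)
  have hν₃ := hν ν₃ (by simp)
  have z₁ := acts_zeta hρ.1 hζ₁
  have z₂ := acts_zeta hρ.1 hζ₂
  have z₃ := acts_zeta hρ.1 hζ₃
  have c₁ := acts_chi hρ.1 hχ₁
  have c₂ := acts_chi hρ.1 hχ₂
  have c₃ := acts_chi hρ.1 hχ₃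
  have hS : ∀ g ∈ S, ∃ (f : ℝ ≃o ℝ) (m : ℤ), InH f ∧ Acts e f m g := by
    intro g hg
    rcases hg with rfl | rfl | rfl | rfl | rfl | rfl
    · exact ⟨_, _, hν₁, z₁⟩
    · exact ⟨_, _, hν₂, z₂⟩
    · exact ⟨_, _, hν₃, z₃⟩
    · exact ⟨_, _, hν₁, c₁⟩
    · exact ⟨_, _, hν₂, c₂⟩
    · exact ⟨_, _, hν₃, c₃⟩
  have hmem : ∀ g ∈ S, g ∈ Subgroup.closure S := fun g hg => Subgroup.subset_closure hg
  have hact : ∀ m : ℤ, ∀ f ∈ H, ∃ g ∈ Subgroup.closure S, Acts e f m g := by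
    intro m
    refine exists_acts hH hgen m ?_
    rcases Int.even_or_odd m with hm | hm
    · have hm' : Even (m - 0) := by simpa using hm
      rintro f (rfl | rfl | rfl)
      · exact ⟨χ₁, hmem _ (by simp [S]), c₁.parity hm'⟩
      · exact ⟨χ₂, hmem _ (by simp [S]), c₂.parity hm'⟩
      · exact ⟨χ₃, hmem _ (by simp [S]), c₃.parity hm'⟩
    · have hm' : Even (m - 1) := hm.sub_odd odd_one
      rintro f (rfl | rfl | rfl)
      · exact ⟨ζ₁, hmem _ (by simp [S]), z₁.parity hm'⟩
      · exact ⟨ζ₂, hmem _ (by simp [S]), z₂.parity hm'⟩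
      · exact ⟨ζ₃, hmem _ (by simp [S]), z₃.parity hm'⟩
  have hΘ := thetaProp he hH hact
  have hsep : SepProp e := sepProp hρ
  obtain ⟨x, -, hx⟩ := exists_fixed hρ hS a₁ ha₁ 0
  obtain ⟨D, -, hD⟩ := chain he hΘ hsep hS a₂⁻¹ (Subgroup.inv_mem _ ha₂)
  obtain ⟨p, hp, hap⟩ := exists_fixed hρ hS a₂ ha₂ (x + D)
  obtain ⟨q, hq, haq⟩ := exists_fixed hρ hS a₃ ha₃ (x + D)
  obtain ⟨t, ht, htx, htp, htq⟩ := hD x p q hp hq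
  refine ⟨1, 1, t, a₃⁻¹, Subgroup.one_mem _, Subgroup.one_mem _, ht, Subgroup.inv_mem _ ha₃,
    {x}, {x}, Set.univ, ⟨x, rfl⟩, ⟨x, rfl⟩, ⟨x, trivial⟩, subset_rfl, Set.subset_univ _,
    ⟨q, closure_fix ?_⟩, ⟨x, closure_fix ?_⟩, ⟨p, closure_fix ?_⟩, ⟨q, closure_fix ?_⟩,
    ?_, ?_, ?_, ?_, Set.subset_univ _⟩
  · rintro g (rfl | rfl | rfl)
    · rfl
    · exact htq
    · exact inv_fix haq
  · rintro g (rfl | rfl)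
    · simpa using hx
    · rfl
  · rintro g (rfl | rfl)
    · simpa using hap
    · exact htp
  · rintro g (rfl | rfl)
    · simpa using haq
    · exact inv_fix haq
  · rintro y rfl
    simpa using hx
  · rintro y rfl
    rw [inv_one, one_mul, mul_one, apply_mul', htx, inv_apply']
  · rintro y -
    rw [inv_one, one_mul, mul_one, apply_mul', inv_apply']
  · intro y hy
    exact absurd rfl hy
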